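/- Let h be a nonnegative continuous weak solution of v∂ₓh − ∂_vvh = 0 in (0,64)×(−4,4) with h = 0 on {0}×(0,4). Then there is a constant c ≥ 1, independent of h, such that the infimum of h(x,v)/φ₀(x,v) over (x,v) ∈ (1,8)×(−2,2) is at most c times the infimum of h(x,v)/φ₀(x,v) over (x,v) ∈ (0,1)×(−1,1). -/

import Mathlib

/-!
The function `φ₀(x, v) = x^{1/6} Ψ(v (9x)^{-1/3})` is a classical solution of `v ∂ₓφ₀ = ∂ᵥᵥφ₀` for
`x > 0`, decreasing in `v` and increasing in `x`. Write `m` for the infimum of `h / φ₀` over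
`(1, 8) × (-2, 2)`, so that `h(2, v) ≥ m φ₀(2, v)` for `-2 < v ≤ 0`.

Where `v < 0` the equation is parabolic with time `-x`, so this lower bound at `x = 2` survives, up
to an exponential factor, on all of `(0, 2] × {-1}`: compare `h` with the product of `e^{κx}` and
the first Dirichlet eigenfunction in `v`. Hence `h ≥ θ` on `{v = -1}` and on `{2} × [-1, 0]`, where
`θ` is a multiple of `m`. On `(δ, 2) × (-1, 2)` one may now compare `h` with a multiple of
`φ₀(x, v) - φ₀(x, 2) - φ₀(δ, 0)` plus a cubic in `max(-v, 0)` that absorbs the error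
`-v ∂ₓφ₀(x, 2)` for `v < 0`. As `δ → 0` this gives `h ≥ κ (φ₀(x, v) - φ₀(x, 2))`, and the
subtraction is harmless because `φ₀(x, 2) ≤ e^{-7/9} φ₀(x, v)` for `x, v ≤ 1`.

Comparison with the merely continuous `h` is justified by mollification: if the scale in `v` is much
smaller than the scale in `x`, the commutator of the convolution with `v ∂ₓ` is uniformly small, and
the classical minimum principle applies to the mollified function.
-/

noncomputable section

open MeasureTheory Set Filter
open scoped ENNReal

/-- The one-dimensional phase space, with points `p = (x, v)`. -/
abbrev P2 : Type := ℝ × ℝ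

/-- `hv` is the weak derivative of `h` in the second (velocity) variable on `D`. -/
def IsWeakVDeriv (D : Set P2) (h hv : P2 → ℝ) : Prop :=
  ∀ ψ : P2 → ℝ, ContDiff ℝ ((⊤ : ℕ∞) : WithTop ℕ∞) ψ → HasCompactSupport ψ →
    tsupport ψ ⊆ D →
    (∫ p in D, h p * fderiv ℝ ψ p ((0:ℝ), (1:ℝ))) = -∫ p in D, hv p * ψ p

/-- `U₁(z) = (1/Γ(5/6)) ∫₀^∞ e^{−zξ} ξ^{−1/6} (1+ξ)^{−7/6} dξ`. -/
def U1 (z : ℝ) : ℝ :=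
  (1 / Real.Gamma (5/6)) *
    ∫ ξ in Set.Ioi (0:ℝ), Real.exp (-(z * ξ)) * ξ ^ (-(1:ℝ)/6) * (1 + ξ) ^ (-(7:ℝ)/6)

/-- `U₂(z) = (1/Γ(1/6)) ∫₀^∞ e^{−ξ} ξ^{−5/6} (z+ξ)^{1/6} dξ`. -/
def U2 (z : ℝ) : ℝ :=
  (1 / Real.Gamma (1/6)) *
    ∫ ξ in Set.Ioi (0:ℝ), Real.exp (-ξ) * ξ ^ (-(5:ℝ)/6) * (z + ξ) ^ ((1:ℝ)/6)

/-- The explicit `1/2`-homogeneous solution `φ₀` of the stationary kinetic Kolmogorov equation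
in the half-line with absorbing boundary condition. -/
def phi0 (x v : ℝ) : ℝ :=
  if v < 0 then x ^ ((1:ℝ)/6) * U2 (-(v ^ 3) / (9 * x))
  else (Real.Gamma (7/6) / Real.Gamma (1/6)) * x ^ ((1:ℝ)/6) *
    Real.exp (-(v ^ 3) / (9 * x)) * U1 (v ^ 3 / (9 * x))

/-- The box `H_r = (0, r³) × (−r, r)`. -/
def Hrect (r : ℝ) : Set P2 := Set.Ioo (0:ℝ) (r ^ 3) ×ˢ Set.Ioo (-r) r

/-- Weak solution of `v ∂ₓ h − ∂ᵥᵥ h = 0` in `(0,R³) × (−R,R)` with `h = 0` on `{0} × (0,R)`. -/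
def IsWeakSolRect (R : ℝ) (h hv : P2 → ℝ) : Prop :=
  LocallyIntegrableOn (fun p => h p ^ 2) (Hrect R) ∧
  LocallyIntegrableOn (fun p => hv p ^ 2) (Hrect R) ∧
  IsWeakVDeriv (Hrect R) h hv ∧
  ∀ ψ : P2 → ℝ, ContDiff ℝ ((⊤ : ℕ∞) : WithTop ℕ∞) ψ → HasCompactSupport ψ →
    tsupport ψ ⊆ Set.Ico 0 (R ^ 3) ×ˢ Set.Ioo (-R) R →
    tsupport ψ ∩ {p : P2 | p.1 = 0} ⊆ {(0:ℝ)} ×ˢ Set.Ioo (0:ℝ) R →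
    (-∫ p in Hrect R, h p * (p.2 * fderiv ℝ ψ p ((1:ℝ), (0:ℝ))))
        + (∫ p in Hrect R, hv p * fderiv ℝ ψ p ((0:ℝ), (1:ℝ))) = 0

open scoped Topology

/-! ### Tricomi integrals -/

/-- The integrand `e^{-zξ} ξ^a (1+ξ)^b` of Tricomi's confluent hypergeometric integral. -/
def tricomiIntegrand (a b z ξ : ℝ) : ℝ := Real.exp (-(z * ξ)) * ξ ^ a * (1 + ξ) ^ b

/-- Tricomi's confluent hypergeometric integral on `(0, ∞)`. In the usual notation it equals
`Γ(a+1) U(a+1, a+b+2, z)`; the exponents themselves are used as parameters, so that the contiguity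
relations shift them by one. -/
def tricomiIntegral (a b z : ℝ) : ℝ := ∫ ξ in Ioi 0, tricomiIntegrand a b z ξ

/-- The integral `∫₀^∞ e^{-ξ} ξ^a (z+ξ)^b dξ`. It is a power of `z` times a Tricomi integral, but
extends continuously to `z = 0` for exponents where the Tricomi integral blows up there. -/
def scaledTricomiIntegral (a b z : ℝ) : ℝ := ∫ ξ in Ioi 0, Real.exp (-ξ) * ξ ^ a * (z + ξ) ^ b

section Tricomi

variable {a b z : ℝ}

lemma measurable_tricomiIntegrand (a b z : ℝ) : Measurable (tricomiIntegrand a b z) := by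
  unfold tricomiIntegrand
  fun_prop

lemma tricomiIntegrand_pos (a b z : ℝ) {ξ : ℝ} (hξ : 0 < ξ) : 0 < tricomiIntegrand a b z ξ := by
  unfold tricomiIntegrand
  positivity

lemma tricomiIntegrand_antitone (a b : ℝ) {ξ : ℝ} (hξ : 0 < ξ) :
    Antitone fun z => tricomiIntegrand a b z ξ := fun z w hzw => by
  dsimp only [tricomiIntegrand]
  gcongr

lemma integrableOn_exp_neg_mul_rpow (ha : -1 < a) (hz : 0 < z) :
    IntegrableOn (fun ξ : ℝ => Real.exp (-(z * ξ)) * ξ ^ a) (Ioi 0) := by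
  simpa only [Real.rpow_one, neg_mul, mul_comm (_ ^ a)] using
    integrableOn_rpow_mul_exp_neg_mul_rpow (p := 1) ha one_pos hz

lemma one_add_rpow_le (b : ℝ) {ξ : ℝ} (hξ : 0 < ξ) :
    (1 + ξ) ^ b ≤ 2 ^ |b| * (1 + ξ ^ |b|) := by
  have hb : (1 + ξ) ^ b ≤ (1 + ξ) ^ |b| :=
    Real.rpow_le_rpow_of_exponent_le (by linarith) (le_abs_self b)
  rcases le_total ξ 1 with h | h
  · calc (1 + ξ) ^ b ≤ 2 ^ |b| := hb.trans (by gcongr; linarith)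
      _ ≤ 2 ^ |b| * (1 + ξ ^ |b|) :=
        le_mul_of_one_le_right (by positivity) (le_add_of_nonneg_right (by positivity))
  · calc (1 + ξ) ^ b ≤ (2 * ξ) ^ |b| := hb.trans (by gcongr; linarith)
      _ = 2 ^ |b| * ξ ^ |b| := Real.mul_rpow zero_le_two hξ.le
      _ ≤ 2 ^ |b| * (1 + ξ ^ |b|) := by gcongr; linarith

lemma integrableOn_tricomiIntegrand (ha : -1 < a) (b : ℝ) (hz : 0 < z) :
    IntegrableOn (tricomiIntegrand a b z) (Ioi 0) := by
  have ha' : -1 < a + |b| := by linarith [abs_nonneg b]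
  refine (((integrableOn_exp_neg_mul_rpow ha hz).add
    (integrableOn_exp_neg_mul_rpow ha' hz)).const_mul (2 ^ |b|)).mono'
    (measurable_tricomiIntegrand a b z).aestronglyMeasurable ?_
  filter_upwards [ae_restrict_mem measurableSet_Ioi] with ξ (hξ : 0 < ξ)
  rw [Real.norm_of_nonneg (tricomiIntegrand_pos a b z hξ).le]
  calc tricomiIntegrand a b z ξ
      ≤ Real.exp (-(z * ξ)) * ξ ^ a * (2 ^ |b| * (1 + ξ ^ |b|)) :=
        mul_le_mul_of_nonneg_left (one_add_rpow_le b hξ) (by positivity)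
    _ = _ := by
        simp only [Pi.add_apply, Real.rpow_add hξ]
        ring

lemma integrableOn_tricomiIntegrand_zero (ha : -1 < a) (hab : a + b < -1) :
    IntegrableOn (tricomiIntegrand a b 0) (Ioi 0) := by
  have hb : b ≤ 0 := by linarith
  have hm := (measurable_tricomiIntegrand a b 0).aestronglyMeasurable (μ := volume)
  rw [← Ioc_union_Ioi_eq_Ioi (zero_le_one (α := ℝ))]
  refine IntegrableOn.union ?_ ?_
  · have h := intervalIntegral.intervalIntegrable_rpow' (a := 0) (b := 1) ha
    rw [intervalIntegrable_iff_integrableOn_Ioc_of_le zero_le_one] at h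
    refine h.mono' hm.restrict ?_
    filter_upwards [ae_restrict_mem measurableSet_Ioc] with ξ hξ
    rw [Real.norm_of_nonneg (tricomiIntegrand_pos a b 0 hξ.1).le]
    have hξ0 : 0 < ξ := hξ.1
    simpa [tricomiIntegrand] using mul_le_of_le_one_right (Real.rpow_nonneg hξ0.le a)
      (Real.rpow_le_one_of_one_le_of_nonpos (by linarith : 1 ≤ 1 + ξ) hb)
  · refine (integrableOn_Ioi_rpow_of_lt hab one_pos).mono' hm.restrict ?_
    filter_upwards [ae_restrict_mem measurableSet_Ioi] with ξ (hξ : 1 < ξ)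
    have hξ0 : 0 < ξ := one_pos.trans hξ
    rw [Real.norm_of_nonneg (tricomiIntegrand_pos a b 0 hξ0).le, Real.rpow_add hξ0]
    simpa [tricomiIntegrand] using mul_le_mul_of_nonneg_left
      (Real.rpow_le_rpow_of_nonpos hξ0 (by linarith : ξ ≤ 1 + ξ) hb) (Real.rpow_nonneg hξ0.le a)

lemma integrableOn_tricomiIntegrand_of_nonneg (ha : -1 < a) (hab : a + b < -1) (hz : 0 ≤ z) :
    IntegrableOn (tricomiIntegrand a b z) (Ioi 0) := by
  rcases hz.eq_or_lt with rfl | hz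
  · exact integrableOn_tricomiIntegrand_zero ha hab
  · exact integrableOn_tricomiIntegrand ha b hz

lemma tricomiIntegral_pos (h : IntegrableOn (tricomiIntegrand a b z) (Ioi 0)) :
    0 < tricomiIntegral a b z := by
  have hpos : ∀ ξ ∈ Ioi (0 : ℝ), 0 < tricomiIntegrand a b z ξ :=
    fun ξ hξ => tricomiIntegrand_pos a b z hξ
  have hsupp : Function.support (tricomiIntegrand a b z) ∩ Ioi 0 = Ioi 0 :=
    inter_eq_right.2 fun ξ hξ => (hpos ξ hξ).ne'
  refine (setIntegral_pos_iff_support_of_nonneg_ae ?_ h).2 (by simp [hsupp])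
  filter_upwards [ae_restrict_mem measurableSet_Ioi] with ξ hξ using (hpos ξ hξ).le

lemma tricomiIntegral_le_of_le {w : ℝ} (hzw : z ≤ w)
    (h : IntegrableOn (tricomiIntegrand a b z) (Ioi 0)) :
    tricomiIntegral a b w ≤ tricomiIntegral a b z := by
  refine integral_mono_of_nonneg ?_ h ?_ <;>
    filter_upwards [ae_restrict_mem measurableSet_Ioi] with ξ hξ
  · exact (tricomiIntegrand_pos a b w hξ).le
  · exact tricomiIntegrand_antitone a b hξ hzw

lemma hasDerivAt_tricomiIntegrand_param (a b z : ℝ) {ξ : ℝ} (hξ : 0 < ξ) :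
    HasDerivAt (fun z => tricomiIntegrand a b z ξ) (-tricomiIntegrand (a + 1) b z ξ) z := by
  have h : HasDerivAt (fun w : ℝ => Real.exp (-(w * ξ))) (Real.exp (-(z * ξ)) * (-(1 * ξ))) z :=
    ((hasDerivAt_id z).mul_const ξ).neg.exp
  refine ((h.mul_const _).mul_const _).congr_deriv ?_
  simp only [tricomiIntegrand, Real.rpow_add_one hξ.ne']
  ring

lemma hasDerivAt_tricomiIntegral (ha : -1 < a) (b : ℝ) (hz : 0 < z) :
    HasDerivAt (tricomiIntegral a b) (-tricomiIntegral (a + 1) b z) z := by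
  have ha' : -1 < a + 1 := by linarith
  have key := hasDerivAt_integral_of_dominated_loc_of_deriv_le
    (μ := volume.restrict (Ioi (0:ℝ))) (F := tricomiIntegrand a b)
    (F' := fun w ξ => -tricomiIntegrand (a + 1) b w ξ)
    (Ioi_mem_nhds (half_lt_self hz))
    (Eventually.of_forall fun w => (measurable_tricomiIntegrand a b w).aestronglyMeasurable)
    (integrableOn_tricomiIntegrand ha b hz)
    (measurable_tricomiIntegrand (a + 1) b z).aestronglyMeasurable.neg ?_
    (integrableOn_tricomiIntegrand ha' b (half_pos hz)) ?_
  · exact key.2.congr_deriv (integral_neg _)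
  · filter_upwards [ae_restrict_mem measurableSet_Ioi] with ξ hξ w (hw : z / 2 < w)
    rw [norm_neg, Real.norm_of_nonneg (tricomiIntegrand_pos _ _ _ hξ).le]
    exact tricomiIntegrand_antitone _ _ hξ hw.le
  · filter_upwards [ae_restrict_mem measurableSet_Ioi] with ξ hξ w _ using
      hasDerivAt_tricomiIntegrand_param a b w hξ

lemma tricomiIntegral_add_one_right (ha : -1 < a) (b : ℝ) (hz : 0 < z) :
    tricomiIntegral a (b + 1) z = tricomiIntegral a b z + tricomiIntegral (a + 1) b z := by
  unfold tricomiIntegral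
  rw [← integral_add (integrableOn_tricomiIntegrand ha b hz)
    (integrableOn_tricomiIntegrand (by linarith) b hz)]
  refine setIntegral_congr_fun measurableSet_Ioi fun ξ (hξ : 0 < ξ) => ?_
  simp only [tricomiIntegrand, Real.rpow_add_one hξ.ne',
    Real.rpow_add_one (by positivity : 1 + ξ ≠ 0)]
  ring

lemma hasDerivAt_tricomiIntegrand (a b z : ℝ) {ξ : ℝ} (hξ : 0 < ξ) :
    HasDerivAt (tricomiIntegrand (a + 1) (b + 1) z)
      ((a + 1) * tricomiIntegrand a (b + 1) z ξ + (b + 1) * tricomiIntegrand (a + 1) b z ξ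
        - z * tricomiIntegrand (a + 1) (b + 1) z ξ) ξ := by
  have h1 : HasDerivAt (fun w : ℝ => Real.exp (-(z * w))) (Real.exp (-(z * ξ)) * (-(z * 1))) ξ :=
    ((hasDerivAt_id ξ).const_mul z).neg.exp
  have h2 := Real.hasDerivAt_rpow_const (x := ξ) (p := a + 1) (Or.inl hξ.ne')
  have h3 : HasDerivAt (fun ξ : ℝ => (1 + ξ) ^ (b + 1)) (1 * (b + 1) * (1 + ξ) ^ (b + 1 - 1)) ξ :=
    ((hasDerivAt_id' ξ).const_add 1).rpow_const (Or.inl (by positivity))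
  refine ((h1.mul h2).mul h3).congr_deriv ?_
  simp only [tricomiIntegrand, add_sub_cancel_right, Pi.mul_apply]
  ring

/-- Integration by parts: the derivative of `e^{-zξ} ξ^{a+1} (1+ξ)^{b+1}` has zero integral. -/
lemma mul_tricomiIntegral_add_one_add_one (ha : -1 < a) (b : ℝ) (hz : 0 < z) :
    z * tricomiIntegral (a + 1) (b + 1) z
      = (a + 1) * tricomiIntegral a (b + 1) z + (b + 1) * tricomiIntegral (a + 1) b z := by
  have ha' : -1 < a + 1 := by linarith
  have i1 := (integrableOn_tricomiIntegrand ha (b + 1) hz).const_mul (a + 1)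
  have i2 := (integrableOn_tricomiIntegrand ha' b hz).const_mul (b + 1)
  have i3 := integrableOn_tricomiIntegrand ha' (b + 1) hz
  have hd : ∀ ξ ∈ Ioi (0:ℝ), HasDerivAt _ _ ξ :=
    fun ξ hξ => hasDerivAt_tricomiIntegrand a b z hξ
  have hi := (i1.add i2).sub (i3.const_mul z)
  have hlim : Tendsto (tricomiIntegrand (a + 1) (b + 1) z) atTop (𝓝 0) :=
    tendsto_zero_of_hasDerivAt_of_integrableOn_Ioi hd hi i3
  have hcont : ContinuousAt (tricomiIntegrand (a + 1) (b + 1) z) 0 := by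
    refine ((by fun_prop : ContinuousAt (fun ξ : ℝ => Real.exp (-(z * ξ))) 0).mul
      (Real.continuousAt_rpow_const _ _ (Or.inr (by linarith)))).mul ?_
    exact ContinuousAt.rpow_const (by fun_prop) (Or.inl (by norm_num))
  have hzero : tricomiIntegrand (a + 1) (b + 1) z 0 = 0 := by
    simp [tricomiIntegrand, Real.zero_rpow (by linarith : a + 1 ≠ 0)]
  have htotal := integral_Ioi_of_hasDerivAt_of_tendsto hcont.continuousWithinAt hd hi hlim
  have hsplit := integral_sub (i1.add i2) (i3.const_mul z)
  simp only [Pi.add_apply, integral_add i1 i2, integral_const_mul] at hsplit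
  rw [hzero, hsplit] at htotal
  unfold tricomiIntegral
  linarith

lemma continuousWithinAt_tricomiIntegral_zero (ha : -1 < a) (hab : a + b < -1) :
    ContinuousWithinAt (tricomiIntegral a b) (Ici 0) 0 := by
  refine continuousWithinAt_of_dominated (bound := tricomiIntegrand a b 0)
    (Eventually.of_forall fun w => (measurable_tricomiIntegrand a b w).aestronglyMeasurable)
    ?_ (integrableOn_tricomiIntegrand_zero ha hab) ?_
  · filter_upwards [self_mem_nhdsWithin] with w (hw : 0 ≤ w)
    filter_upwards [ae_restrict_mem measurableSet_Ioi] with ξ hξ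
    rw [Real.norm_of_nonneg (tricomiIntegrand_pos a b w hξ).le]
    exact tricomiIntegrand_antitone a b hξ hw
  · filter_upwards [ae_restrict_mem measurableSet_Ioi] with ξ hξ
    exact (hasDerivAt_tricomiIntegrand_param a b 0 hξ).continuousAt.continuousWithinAt

lemma integral_rpow_mul_one_sub_rpow {p q : ℝ} (hp : 0 < p) (hq : 0 < q) :
    ∫ t in Ioo (0 : ℝ) 1, t ^ (p - 1) * (1 - t) ^ (q - 1) = ProbabilityTheory.beta p q := by
  have hB := ProbabilityTheory.beta_pos hp hq
  have hone : ∫ t in Ioo (0 : ℝ) 1,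
      1 / ProbabilityTheory.beta p q * t ^ (p - 1) * (1 - t) ^ (q - 1) = 1 := by
    rw [integral_eq_lintegral_of_nonneg_ae, ← ProbabilityTheory.lintegral_betaPDF,
      ProbabilityTheory.lintegral_betaPDF_eq_one hp hq, ENNReal.toReal_one]
    · filter_upwards [ae_restrict_mem measurableSet_Ioo] with t ht
      have := ht.1
      have := sub_pos.2 ht.2
      simp only [Pi.zero_apply]
      positivity
    · exact Measurable.aestronglyMeasurable (by fun_prop)
  simp only [mul_assoc, integral_const_mul] at hone
  field_simp at hone
  exact hone

/-- The substitution `ξ = t / (1 - t)` turns the integral at `z = 0` into Euler's Beta integral. -/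
lemma tricomiIntegral_zero {p q : ℝ} (hp : 0 < p) (hq : 0 < q) :
    tricomiIntegral (p - 1) (-(p + q)) 0 = ProbabilityTheory.beta p q := by
  have himage : (fun t : ℝ => t / (1 - t)) '' Ioo 0 1 = Ioi 0 := by
    ext ξ
    refine ⟨?_, fun hξ => ⟨ξ / (1 + ξ), ⟨?_, ?_⟩, ?_⟩⟩
    · rintro ⟨t, ht, rfl⟩
      exact div_pos ht.1 (sub_pos.2 ht.2)
    all_goals have hξ : 0 < ξ := hξ
    · positivity
    · rw [div_lt_one] <;> linarith
    · field_simp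
      ring
  have hderiv : ∀ t ∈ Ioo (0 : ℝ) 1,
      HasDerivWithinAt (fun t : ℝ => t / (1 - t)) (1 / (1 - t) ^ 2) (Ioo 0 1) t := fun t ht => by
    have h := (hasDerivAt_id t).div ((hasDerivAt_id t).const_sub 1) (sub_pos.2 ht.2).ne'
    refine (h.congr_deriv ?_).hasDerivWithinAt
    simp
  have hmono : MonotoneOn (fun t : ℝ => t / (1 - t)) (Ioo 0 1) := fun s hs t ht hst =>
    div_le_div₀ ht.1.le hst (sub_pos.2 ht.2) (by linarith)
  rw [tricomiIntegral, ← himage, integral_image_eq_integral_deriv_smul_of_monotoneOn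
    measurableSet_Ioo hderiv hmono, ← integral_rpow_mul_one_sub_rpow hp hq]
  refine setIntegral_congr_fun measurableSet_Ioo fun t ht => ?_
  have ht1 : 0 < 1 - t := sub_pos.2 ht.2
  have hsum : 1 + t / (1 - t) = (1 - t)⁻¹ := by
    field_simp
    ring
  have hpow : (1 - t) ^ (p + q) = (1 - t) ^ (p - 1) * (1 - t) ^ (q - 1) * (1 - t) ^ 2 := by
    rw [← Real.rpow_natCast, ← Real.rpow_add ht1, ← Real.rpow_add ht1]
    congr 1
    norm_num
    ring
  simp only [tricomiIntegrand, zero_mul, neg_zero, Real.exp_zero, one_mul, smul_eq_mul, hsum,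
    Real.div_rpow ht.1.le ht1.le, Real.inv_rpow ht1.le, Real.rpow_neg ht1.le, inv_inv, hpow]
  field_simp

lemma scaledTricomiIntegral_eq (a b : ℝ) (hz : 0 < z) :
    scaledTricomiIntegral a b z = z ^ (a + b + 1) * tricomiIntegral a b z := by
  have h := integral_comp_mul_left_Ioi
    (fun ξ : ℝ => Real.exp (-ξ) * ξ ^ a * (z + ξ) ^ b) 0 hz
  rw [mul_zero, smul_eq_mul, eq_inv_mul_iff_mul_eq₀ hz.ne'] at h
  rw [scaledTricomiIntegral, ← h, tricomiIntegral, ← integral_const_mul, ← integral_const_mul]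
  refine setIntegral_congr_fun measurableSet_Ioi fun ξ (hξ : 0 < ξ) => ?_
  simp only [tricomiIntegrand, show z + z * ξ = z * (1 + ξ) by ring, Real.mul_rpow hz.le hξ.le,
    Real.mul_rpow hz.le (by positivity : 0 ≤ 1 + ξ), Real.rpow_add_one hz.ne', Real.rpow_add hz]
  ring

lemma scaledTricomiIntegral_zero (h : -1 < a + b) :
    scaledTricomiIntegral a b 0 = Real.Gamma (a + b + 1) := by
  rw [scaledTricomiIntegral, Real.Gamma_eq_integral (by linarith)]
  refine setIntegral_congr_fun measurableSet_Ioi fun ξ (hξ : 0 < ξ) => ?_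
  simp only [zero_add, add_sub_cancel_right, Real.rpow_add hξ]
  ring

lemma scaledTricomiIntegral_le_zero (hb : b ≤ 0) (h : -1 < a + b) (hz : 0 ≤ z) :
    scaledTricomiIntegral a b z ≤ scaledTricomiIntegral a b 0 := by
  refine integral_mono_of_nonneg ?_ ?_ ?_
  · filter_upwards [ae_restrict_mem measurableSet_Ioi] with ξ (hξ : 0 < ξ)
    simp only [Pi.zero_apply]
    positivity
  · refine (integrableOn_exp_neg_mul_rpow h one_pos).congr_fun (fun ξ (hξ : 0 < ξ) => ?_)
      measurableSet_Ioi
    simp only [one_mul, zero_add, Real.rpow_add hξ, mul_assoc]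
  · filter_upwards [ae_restrict_mem measurableSet_Ioi] with ξ (hξ : 0 < ξ)
    exact mul_le_mul_of_nonneg_left
      (Real.rpow_le_rpow_of_nonpos (by linarith) (by linarith) hb) (by positivity)

lemma continuousWithinAt_scaledTricomiIntegral_zero (ha : -1 < a) (h : -1 < a + b) :
    ContinuousWithinAt (scaledTricomiIntegral a b) (Ici 0) 0 := by
  refine continuousWithinAt_of_dominated
    (bound := fun ξ : ℝ => tricomiIntegrand a b 1 ξ + Real.exp (-(1 * ξ)) * ξ ^ (a + b))
    (Eventually.of_forall fun w => Measurable.aestronglyMeasurable (by fun_prop)) ?_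
    ((integrableOn_tricomiIntegrand ha b one_pos).add (integrableOn_exp_neg_mul_rpow h one_pos)) ?_
  · filter_upwards [self_mem_nhdsWithin, mem_nhdsWithin_of_mem_nhds (Iio_mem_nhds zero_lt_one)]
      with w (hw : 0 ≤ w) (hw1 : w < 1)
    filter_upwards [ae_restrict_mem measurableSet_Ioi] with ξ (hξ : 0 < ξ)
    have hle : (w + ξ) ^ b ≤ (1 + ξ) ^ b + ξ ^ b := by
      rcases le_total 0 b with hb | hb
      · exact (Real.rpow_le_rpow (by linarith) (by linarith) hb).trans
          (le_add_of_nonneg_right (by positivity))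
      · exact (Real.rpow_le_rpow_of_nonpos hξ (by linarith) hb).trans
          (le_add_of_nonneg_left (by positivity))
    rw [Real.norm_of_nonneg (by positivity), tricomiIntegrand, one_mul, Real.rpow_add hξ,
      ← mul_assoc, ← mul_add]
    exact mul_le_mul_of_nonneg_left hle (by positivity)
  · filter_upwards [ae_restrict_mem measurableSet_Ioi] with ξ (hξ : 0 < ξ)
    refine ContinuousAt.continuousWithinAt (ContinuousAt.mul (by fun_prop) ?_)
    exact ContinuousAt.rpow_const (by fun_prop) (Or.inl (by simpa using hξ.ne'))

end Tricomi

/-! ### The self-similar profile -/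

/-- The profile `Ψ` of the self-similar function `φ₀(x, v) = x^{1/6} Ψ(v (9x)^{-1/3})`. -/
def phi0Profile (t : ℝ) : ℝ :=
  if t < 0 then U2 (-t ^ 3)
  else Real.Gamma (7/6) / Real.Gamma (1/6) * Real.exp (-t ^ 3) * U1 (t ^ 3)

/-- The derivative `Ψ'` of the profile, in closed form on each side of `0`. -/
def phi0ProfileDeriv (t : ℝ) : ℝ :=
  if t < 0 then -(1 / (2 * Real.Gamma (1/6))) * tricomiIntegral (-(5:ℝ)/6) (-(5:ℝ)/6) (-t ^ 3)
  else -(1 / (2 * Real.Gamma (5/6))) *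
    (Real.exp (-t ^ 3) * scaledTricomiIntegral (-(1:ℝ)/6) (-(1:ℝ)/6) (t ^ 3))

/-- The profile `Θ = Ψ/6 - tΨ'/3` of the `x`-derivative:
`∂ₓφ₀(x, v) = x^{-5/6} Θ(v (9x)^{-1/3})`. -/
def phi0XDerivProfile (t : ℝ) : ℝ := phi0Profile t / 6 - t * phi0ProfileDeriv t / 3

section Profile

variable {t : ℝ}

lemma gamma_one_sixth_pos : 0 < Real.Gamma (1/6) := Real.Gamma_pos_of_pos (by norm_num)

lemma gamma_five_sixths_pos : 0 < Real.Gamma (5/6) := Real.Gamma_pos_of_pos (by norm_num)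

lemma gamma_seven_sixths : Real.Gamma (7/6) = Real.Gamma (1/6) / 6 := by
  have h := Real.Gamma_add_one (s := 1/6) (by norm_num)
  norm_num at h ⊢
  rw [h]
  ring

lemma neg_pow_three_pos (ht : t < 0) : 0 < -t ^ 3 := neg_pos.2 (Odd.pow_neg (by decide) ht)

lemma neg_pow_three_nonneg (ht : t ≤ 0) : 0 ≤ -t ^ 3 :=
  neg_nonneg.2 (Odd.pow_nonpos (by decide) ht)

lemma pow_three_rpow (ht : 0 ≤ t) (p : ℝ) : (t ^ 3) ^ p = t ^ (3 * p) := by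
  rw [← Real.rpow_natCast, ← Real.rpow_mul ht]
  norm_num

lemma phi0Profile_of_nonneg (ht : 0 ≤ t) :
    phi0Profile t = 1 / (6 * Real.Gamma (5/6)) *
      (Real.exp (-t ^ 3) * tricomiIntegral (-(1:ℝ)/6) (-(7:ℝ)/6) (t ^ 3)) := by
  rw [phi0Profile, if_neg ht.not_gt, gamma_seven_sixths, U1]
  have := gamma_one_sixth_pos.ne'
  simp only [tricomiIntegral, tricomiIntegrand]
  field_simp

lemma phi0Profile_of_nonpos (ht : t ≤ 0) :
    phi0Profile t = 1 / Real.Gamma (1/6) *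
      scaledTricomiIntegral (-(5:ℝ)/6) ((1:ℝ)/6) (-t ^ 3) := by
  rcases ht.eq_or_lt with rfl | ht
  · have hbeta := tricomiIntegral_zero (p := 5/6) (q := 1/3) (by norm_num) (by norm_num)
    have hgamma := scaledTricomiIntegral_zero (a := -(5:ℝ)/6) (b := (1:ℝ)/6) (by norm_num)
    rw [phi0Profile_of_nonneg le_rfl]
    norm_num [ProbabilityTheory.beta, gamma_seven_sixths] at hbeta hgamma ⊢
    rw [hbeta, hgamma]
    have := gamma_one_sixth_pos.ne'
    have := gamma_five_sixths_pos.ne'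
    field_simp
  · rw [phi0Profile, if_pos ht, U2, scaledTricomiIntegral]

lemma phi0Profile_of_neg (ht : t < 0) :
    phi0Profile t = -t / Real.Gamma (1/6) *
      tricomiIntegral (-(5:ℝ)/6) ((1:ℝ)/6) (-t ^ 3) := by
  have hroot : (-t ^ 3) ^ (-(5:ℝ)/6 + 1/6 + 1) = -t := by
    rw [← Odd.neg_pow (by decide), pow_three_rpow (by linarith)]
    norm_num
  rw [phi0Profile_of_nonpos ht.le, scaledTricomiIntegral_eq _ _ (neg_pow_three_pos ht), hroot]
  ring

lemma phi0ProfileDeriv_of_nonneg (ht : 0 ≤ t) :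
    phi0ProfileDeriv t = -(1 / (2 * Real.Gamma (5/6))) *
      (Real.exp (-t ^ 3) * scaledTricomiIntegral (-(1:ℝ)/6) (-(1:ℝ)/6) (t ^ 3)) := by
  rw [phi0ProfileDeriv, if_neg ht.not_gt]

lemma phi0ProfileDeriv_of_pos (ht : 0 < t) :
    phi0ProfileDeriv t = -(t ^ 2 / (2 * Real.Gamma (5/6))) *
      (Real.exp (-t ^ 3) * tricomiIntegral (-(1:ℝ)/6) (-(1:ℝ)/6) (t ^ 3)) := by
  have hroot : (t ^ 3) ^ (-(1:ℝ)/6 + -(1:ℝ)/6 + 1) = t ^ 2 := by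
    rw [pow_three_rpow ht.le]
    norm_num
  rw [phi0ProfileDeriv_of_nonneg ht.le, scaledTricomiIntegral_eq _ _ (by positivity), hroot]
  ring

lemma phi0ProfileDeriv_of_nonpos (ht : t ≤ 0) :
    phi0ProfileDeriv t = -(1 / (2 * Real.Gamma (1/6))) *
      tricomiIntegral (-(5:ℝ)/6) (-(5:ℝ)/6) (-t ^ 3) := by
  rcases ht.eq_or_lt with rfl | ht
  · have hbeta := tricomiIntegral_zero (p := 1/6) (q := 2/3) (by norm_num) (by norm_num)
    have hgamma := scaledTricomiIntegral_zero (a := -(1:ℝ)/6) (b := -(1:ℝ)/6) (by norm_num)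
    rw [phi0ProfileDeriv_of_nonneg le_rfl]
    norm_num [ProbabilityTheory.beta] at hbeta hgamma ⊢
    rw [hbeta, hgamma]
    have := gamma_one_sixth_pos.ne'
    field_simp
  · rw [phi0ProfileDeriv, if_pos ht]

lemma phi0XDerivProfile_of_neg (ht : t < 0) :
    phi0XDerivProfile t = -t / (6 * Real.Gamma (1/6)) *
      tricomiIntegral ((1:ℝ)/6) (-(5:ℝ)/6) (-t ^ 3) := by
  have hadd := tricomiIntegral_add_one_right (a := -(5:ℝ)/6) (by norm_num) (-(5:ℝ)/6)
    (neg_pow_three_pos ht)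
  norm_num at hadd
  rw [phi0XDerivProfile, phi0Profile_of_neg ht, phi0ProfileDeriv_of_nonpos ht.le]
  norm_num
  rw [hadd]
  ring

lemma continuousAt_zero_of_comp_pow_three {F f g : ℝ → ℝ} (hf : ContinuousWithinAt f (Ici 0) 0)
    (hg : ContinuousWithinAt g (Ici 0) 0) (hFf : ∀ t ≤ 0, F t = f (-t ^ 3))
    (hFg : ∀ t, 0 ≤ t → F t = g (t ^ 3)) : ContinuousAt F 0 := by
  rw [continuousAt_iff_continuous_left_right]
  constructor
  · have h : ContinuousWithinAt (fun t : ℝ => f (-t ^ 3)) (Iic 0) 0 :=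
      ContinuousWithinAt.comp (t := Ici 0) (by simpa using hf) (by fun_prop)
        fun t ht => neg_pow_three_nonneg ht
    exact h.congr hFf (hFf 0 le_rfl)
  · have h : ContinuousWithinAt (fun t : ℝ => g (t ^ 3)) (Ici 0) 0 :=
      ContinuousWithinAt.comp (t := Ici 0) (by simpa using hg) (by fun_prop)
        fun t (ht : 0 ≤ t) => mem_Ici.2 (by positivity)
    exact h.congr hFg (hFg 0 le_rfl)

lemma continuousAt_phi0Profile_zero : ContinuousAt phi0Profile 0 :=
  continuousAt_zero_of_comp_pow_three
    ((continuousWithinAt_scaledTricomiIntegral_zero (by norm_num) (by norm_num)).const_mul _)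
    ((ContinuousWithinAt.mul (f := fun z => Real.exp (-z)) (by fun_prop)
      (continuousWithinAt_tricomiIntegral_zero (by norm_num) (by norm_num))).const_mul _)
    (fun _ => phi0Profile_of_nonpos) (fun _ => phi0Profile_of_nonneg)

lemma continuousAt_phi0ProfileDeriv_zero : ContinuousAt phi0ProfileDeriv 0 :=
  continuousAt_zero_of_comp_pow_three
    ((continuousWithinAt_tricomiIntegral_zero (by norm_num) (by norm_num)).const_mul _)
    ((ContinuousWithinAt.mul (f := fun z => Real.exp (-z)) (by fun_prop)
      (continuousWithinAt_scaledTricomiIntegral_zero (by norm_num) (by norm_num))).const_mul _)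
    (fun _ => phi0ProfileDeriv_of_nonpos) (fun _ => phi0ProfileDeriv_of_nonneg)

lemma hasDerivAt_tricomiIntegral_neg_pow_three {a : ℝ} (ha : -1 < a) (b : ℝ) (ht : t < 0) :
    HasDerivAt (fun t => tricomiIntegral a b (-t ^ 3))
      (3 * t ^ 2 * tricomiIntegral (a + 1) b (-t ^ 3)) t := by
  refine ((hasDerivAt_tricomiIntegral ha b (neg_pow_three_pos ht)).comp t
    (hasDerivAt_pow 3 t).neg).congr_deriv ?_
  norm_num
  ring

lemma hasDerivAt_exp_mul_tricomiIntegral_pow_three {a : ℝ} (ha : -1 < a) (b : ℝ) (ht : 0 < t) :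
    HasDerivAt (fun t => Real.exp (-t ^ 3) * tricomiIntegral a b (t ^ 3))
      (-(3 * t ^ 2 * (Real.exp (-t ^ 3) * tricomiIntegral a (b + 1) (t ^ 3)))) t := by
  have hz : 0 < t ^ 3 := by positivity
  refine ((hasDerivAt_pow 3 t).neg.exp.mul
    (HasDerivAt.comp (h := fun t => t ^ 3) t (hasDerivAt_tricomiIntegral ha b hz)
      (hasDerivAt_pow 3 t))).congr_deriv ?_
  rw [tricomiIntegral_add_one_right ha b hz]
  norm_num
  ring

lemma hasDerivAt_phi0Profile_of_neg (ht : t < 0) :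
    HasDerivAt phi0Profile (phi0ProfileDeriv t) t := by
  have heq : phi0Profile =ᶠ[𝓝 t] fun t => -t / Real.Gamma (1/6) *
      tricomiIntegral (-(5:ℝ)/6) ((1:ℝ)/6) (-t ^ 3) := by
    filter_upwards [Iio_mem_nhds ht] with s hs using phi0Profile_of_neg hs
  have hibp := mul_tricomiIntegral_add_one_add_one (a := -(5:ℝ)/6) (by norm_num) (-(5:ℝ)/6)
    (neg_pow_three_pos ht)
  have hadd := tricomiIntegral_add_one_right (a := -(5:ℝ)/6) (by norm_num) (-(5:ℝ)/6)
    (neg_pow_three_pos ht)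
  refine ((((hasDerivAt_neg t).div_const (Real.Gamma (1/6))).mul
    (hasDerivAt_tricomiIntegral_neg_pow_three (a := -(5:ℝ)/6) (by norm_num) (1/6) ht)).congr_deriv
    ?_).congr_of_eventuallyEq heq
  rw [phi0ProfileDeriv_of_nonpos ht.le]
  norm_num at hibp hadd ⊢
  have := gamma_one_sixth_pos.ne'
  field_simp
  linear_combination 6 * hibp - hadd

lemma hasDerivAt_phi0Profile_of_pos (ht : 0 < t) :
    HasDerivAt phi0Profile (phi0ProfileDeriv t) t := by
  have heq : phi0Profile =ᶠ[𝓝 t] fun t => 1 / (6 * Real.Gamma (5/6)) *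
      (Real.exp (-t ^ 3) * tricomiIntegral (-(1:ℝ)/6) (-(7:ℝ)/6) (t ^ 3)) := by
    filter_upwards [Ioi_mem_nhds ht] with s hs using phi0Profile_of_nonneg (le_of_lt hs)
  refine (((hasDerivAt_exp_mul_tricomiIntegral_pow_three (a := -(1:ℝ)/6) (by norm_num) (-(7:ℝ)/6)
    ht).const_mul _).congr_deriv ?_).congr_of_eventuallyEq heq
  rw [phi0ProfileDeriv_of_pos ht]
  norm_num
  field_simp
  ring

lemma hasDerivAt_phi0Profile (t : ℝ) : HasDerivAt phi0Profile (phi0ProfileDeriv t) t :=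
  hasDerivAt_of_hasDerivAt_of_ne' (x := 0)
    (fun _ hs => hs.lt_or_gt.elim hasDerivAt_phi0Profile_of_neg hasDerivAt_phi0Profile_of_pos)
    continuousAt_phi0Profile_zero continuousAt_phi0ProfileDeriv_zero t

lemma hasDerivAt_phi0ProfileDeriv_of_neg (ht : t < 0) :
    HasDerivAt phi0ProfileDeriv (9 * t * phi0XDerivProfile t) t := by
  have heq : phi0ProfileDeriv =ᶠ[𝓝 t] fun t => -(1 / (2 * Real.Gamma (1/6))) *
      tricomiIntegral (-(5:ℝ)/6) (-(5:ℝ)/6) (-t ^ 3) := by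
    filter_upwards [Iio_mem_nhds ht] with s hs using phi0ProfileDeriv_of_nonpos (le_of_lt hs)
  refine (((hasDerivAt_tricomiIntegral_neg_pow_three (a := -(5:ℝ)/6) (by norm_num) (-(5:ℝ)/6)
    ht).const_mul _).congr_deriv ?_).congr_of_eventuallyEq heq
  rw [phi0XDerivProfile_of_neg ht]
  norm_num
  field_simp
  ring

lemma hasDerivAt_phi0ProfileDeriv_of_pos (ht : 0 < t) :
    HasDerivAt phi0ProfileDeriv (9 * t * phi0XDerivProfile t) t := by
  have hz : 0 < t ^ 3 := by positivity
  have heq : phi0ProfileDeriv =ᶠ[𝓝 t] fun t => -(t ^ 2 / (2 * Real.Gamma (5/6))) *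
      (Real.exp (-t ^ 3) * tricomiIntegral (-(1:ℝ)/6) (-(1:ℝ)/6) (t ^ 3)) := by
    filter_upwards [Ioi_mem_nhds ht] with s hs using phi0ProfileDeriv_of_pos hs
  have hibp := mul_tricomiIntegral_add_one_add_one (a := -(1:ℝ)/6) (by norm_num) (-(7:ℝ)/6) hz
  have hadd := tricomiIntegral_add_one_right (a := -(1:ℝ)/6) (by norm_num) (-(7:ℝ)/6) hz
  have hadd' := tricomiIntegral_add_one_right (a := -(1:ℝ)/6) (by norm_num) (-(1:ℝ)/6) hz
  refine ((((hasDerivAt_pow 2 t).div_const (2 * Real.Gamma (5/6))).neg.mul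
    (hasDerivAt_exp_mul_tricomiIntegral_pow_three (a := -(1:ℝ)/6) (by norm_num) (-(1:ℝ)/6)
    ht)).congr_deriv ?_).congr_of_eventuallyEq heq
  rw [phi0XDerivProfile, phi0Profile_of_nonneg ht.le, phi0ProfileDeriv_of_pos ht]
  norm_num at hibp hadd hadd' ⊢
  have := gamma_five_sixths_pos.ne'
  field_simp
  linear_combination 324 * t ^ 3 * hadd' + 324 * hibp + 54 * hadd

lemma hasDerivAt_phi0ProfileDeriv (t : ℝ) :
    HasDerivAt phi0ProfileDeriv (9 * t * phi0XDerivProfile t) t := by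
  refine hasDerivAt_of_hasDerivAt_of_ne' (x := 0) (g := fun t => 9 * t * phi0XDerivProfile t)
    (fun _ hs => hs.lt_or_gt.elim hasDerivAt_phi0ProfileDeriv_of_neg
      hasDerivAt_phi0ProfileDeriv_of_pos) continuousAt_phi0ProfileDeriv_zero ?_ t
  have h := continuousAt_phi0Profile_zero
  have h' := continuousAt_phi0ProfileDeriv_zero
  unfold phi0XDerivProfile
  fun_prop

lemma phi0Profile_pos (t : ℝ) : 0 < phi0Profile t := by
  rcases lt_or_ge t 0 with ht | ht
  · rw [phi0Profile_of_neg ht]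
    exact mul_pos (div_pos (neg_pos.2 ht) gamma_one_sixth_pos) (tricomiIntegral_pos
      (integrableOn_tricomiIntegrand (by norm_num) _ (neg_pow_three_pos ht)))
  · rw [phi0Profile_of_nonneg ht]
    have := gamma_five_sixths_pos
    have := tricomiIntegral_pos (integrableOn_tricomiIntegrand_of_nonneg
      (a := -(1:ℝ)/6) (b := -(7:ℝ)/6) (by norm_num) (by norm_num) (pow_nonneg ht 3))
    positivity

lemma phi0ProfileDeriv_neg (t : ℝ) : phi0ProfileDeriv t < 0 := by
  rcases le_or_gt t 0 with ht | ht
  · rw [phi0ProfileDeriv_of_nonpos ht, neg_mul, neg_lt_zero]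
    have := gamma_one_sixth_pos
    have := tricomiIntegral_pos (integrableOn_tricomiIntegrand_of_nonneg
      (a := -(5:ℝ)/6) (b := -(5:ℝ)/6) (by norm_num) (by norm_num) (neg_pow_three_nonneg ht))
    positivity
  · rw [phi0ProfileDeriv_of_pos ht, neg_mul, neg_lt_zero]
    have := gamma_five_sixths_pos
    have := tricomiIntegral_pos (integrableOn_tricomiIntegrand
      (a := -(1:ℝ)/6) (by norm_num) (-(1:ℝ)/6) (pow_pos ht 3))
    positivity

lemma phi0Profile_antitone : Antitone phi0Profile :=
  antitone_of_hasDerivAt_nonpos hasDerivAt_phi0Profile fun t => (phi0ProfileDeriv_neg t).le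

lemma phi0XDerivProfile_nonneg (t : ℝ) : 0 ≤ phi0XDerivProfile t := by
  rcases lt_or_ge t 0 with ht | ht
  · rw [phi0XDerivProfile_of_neg ht]
    have := gamma_one_sixth_pos
    have := tricomiIntegral_pos (integrableOn_tricomiIntegrand
      (a := (1:ℝ)/6) (by norm_num) (-(5:ℝ)/6) (neg_pow_three_pos ht))
    have := neg_pos.2 ht
    positivity
  · have := phi0Profile_pos t
    have := mul_nonneg ht (neg_nonneg.2 (phi0ProfileDeriv_neg t).le)
    unfold phi0XDerivProfile
    linarith

lemma phi0Profile_le_exp_mul {s : ℝ} (hs : 0 ≤ s) (hst : s ≤ t) :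
    phi0Profile t ≤ Real.exp (s ^ 3 - t ^ 3) * phi0Profile s := by
  have := gamma_five_sixths_pos
  have hle : tricomiIntegral (-(1:ℝ)/6) (-(7:ℝ)/6) (t ^ 3)
      ≤ tricomiIntegral (-(1:ℝ)/6) (-(7:ℝ)/6) (s ^ 3) :=
    tricomiIntegral_le_of_le (by gcongr) (integrableOn_tricomiIntegrand_of_nonneg
      (by norm_num) (by norm_num) (by positivity))
  calc phi0Profile t ≤ 1 / (6 * Real.Gamma (5/6)) *
        (Real.exp (-t ^ 3) * tricomiIntegral (-(1:ℝ)/6) (-(7:ℝ)/6) (s ^ 3)) := by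
        rw [phi0Profile_of_nonneg (hs.trans hst)]
        gcongr
    _ = Real.exp (s ^ 3 - t ^ 3) * phi0Profile s := by
        rw [phi0Profile_of_nonneg hs, show -t ^ 3 = (s ^ 3 - t ^ 3) + -s ^ 3 by ring, Real.exp_add]
        ring

lemma neg_phi0ProfileDeriv_le (ht : 0 ≤ t) :
    -phi0ProfileDeriv t ≤ Real.exp (-t ^ 3) * -phi0ProfileDeriv 0 := by
  have := gamma_five_sixths_pos
  have hle := scaledTricomiIntegral_le_zero (a := -(1:ℝ)/6) (b := -(1:ℝ)/6) (by norm_num)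
    (by norm_num) (pow_nonneg ht 3)
  calc -phi0ProfileDeriv t ≤ 1 / (2 * Real.Gamma (5/6)) *
        (Real.exp (-t ^ 3) * scaledTricomiIntegral (-(1:ℝ)/6) (-(1:ℝ)/6) 0) := by
        rw [phi0ProfileDeriv_of_nonneg ht, neg_mul, neg_neg]
        gcongr
    _ = Real.exp (-t ^ 3) * -phi0ProfileDeriv 0 := by
        rw [phi0ProfileDeriv_of_nonneg le_rfl]
        simp
        ring

lemma pow_four_le_two_mul_exp_pow_three (ht : 0 ≤ t) : t ^ 4 ≤ 2 * Real.exp (t ^ 3) := by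
  have := Real.quadratic_le_exp_of_nonneg (pow_nonneg ht 3)
  nlinarith [sq_nonneg (t ^ 3 - t), sq_nonneg (t ^ 2 - 1), pow_nonneg ht 3]

/-- The superexponential decay of the profile dominates the factor `t³`. -/
lemma exists_pow_three_mul_phi0XDerivProfile_le :
    ∃ C, 0 ≤ C ∧ ∀ t, t ^ 3 * phi0XDerivProfile t ≤ C := by
  have hΨ := phi0Profile_pos 0
  have hΨ' := neg_pos.2 (phi0ProfileDeriv_neg 0)
  refine ⟨phi0Profile 0 / 6 + 2 * -phi0ProfileDeriv 0 / 3, by positivity, fun t => ?_⟩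
  rcases le_total t 0 with ht | ht
  · exact (mul_nonpos_of_nonpos_of_nonneg (Odd.pow_nonpos (by decide) ht)
      (phi0XDerivProfile_nonneg t)).trans (by positivity)
  have h3 : t ^ 3 * Real.exp (-t ^ 3) ≤ 1 := by
    rw [Real.exp_neg, ← div_eq_mul_inv, div_le_one (Real.exp_pos _)]
    linarith [Real.add_one_le_exp (t ^ 3)]
  have h4 : t ^ 4 * Real.exp (-t ^ 3) ≤ 2 := by
    rw [Real.exp_neg, ← div_eq_mul_inv, div_le_iff₀ (Real.exp_pos _)]
    exact pow_four_le_two_mul_exp_pow_three ht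
  calc t ^ 3 * phi0XDerivProfile t
      = t ^ 3 * phi0Profile t / 6 + t ^ 4 * -phi0ProfileDeriv t / 3 := by
        unfold phi0XDerivProfile
        ring
    _ ≤ t ^ 3 * (Real.exp (-t ^ 3) * phi0Profile 0) / 6
        + t ^ 4 * (Real.exp (-t ^ 3) * -phi0ProfileDeriv 0) / 3 := by
        gcongr
        · simpa using phi0Profile_le_exp_mul le_rfl ht
        · exact neg_phi0ProfileDeriv_le ht
    _ ≤ 1 * phi0Profile 0 / 6 + 2 * -phi0ProfileDeriv 0 / 3 := by
        rw [← mul_assoc, ← mul_assoc]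
        gcongr
    _ = _ := by ring

end Profile

/-! ### The Kolmogorov operator and its minimum principle -/

/-- `HasKolmogorovAt u L p`: at `p = (x, v)` the function `u` has the derivatives that enter
`v ∂ₓu - ∂ᵥᵥu`, and this expression takes the value `L` there. -/
def HasKolmogorovAt (u : P2 → ℝ) (L : ℝ) (p : P2) : Prop :=
  ∃ (ux uvv : ℝ) (uv : ℝ → ℝ), HasDerivAt (fun x => u (x, p.2)) ux p.1 ∧
    (∀ᶠ v in 𝓝 p.2, HasDerivAt (fun v => u (p.1, v)) (uv v) v) ∧
    HasDerivAt uv uvv p.2 ∧ p.2 * ux - uvv = L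

/-- The part of the boundary of the box `[x₀, x₁] × [a, b]` on which boundary data are prescribed:
both lateral sides, and the two ends in `x` where the transport `v ∂ₓ` enters the box. -/
def incomingBoundary (x₀ x₁ a b : ℝ) : Set P2 :=
  {p ∈ Icc x₀ x₁ ×ˢ Icc a b |
    p.2 = a ∨ p.2 = b ∨ (p.1 = x₀ ∧ 0 ≤ p.2) ∨ (p.1 = x₁ ∧ p.2 ≤ 0)}

namespace HasKolmogorovAt

variable {u w : P2 → ℝ} {f g g' : ℝ → ℝ} {L L' f' g'' : ℝ} {p : P2}

lemma add (hu : HasKolmogorovAt u L p) (hw : HasKolmogorovAt w L' p) :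
    HasKolmogorovAt (fun q => u q + w q) (L + L') p := by
  obtain ⟨ux, uvv, uv, hux, huv, huvv, rfl⟩ := hu
  obtain ⟨wx, wvv, wv, hwx, hwv, hwvv, rfl⟩ := hw
  refine ⟨_, _, _, hux.add hwx, ?_, huvv.add hwvv, by ring⟩
  filter_upwards [huv, hwv] with v h₁ h₂ using h₁.add h₂

lemma const_mul (c : ℝ) (hu : HasKolmogorovAt u L p) :
    HasKolmogorovAt (fun q => c * u q) (c * L) p := by
  obtain ⟨ux, uvv, uv, hux, huv, huvv, rfl⟩ := hu
  exact ⟨_, _, _, hux.const_mul c, huv.mono fun v h => h.const_mul c, huvv.const_mul c, by ring⟩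

lemma sub (hu : HasKolmogorovAt u L p) (hw : HasKolmogorovAt w L' p) :
    HasKolmogorovAt (fun q => u q - w q) (L - L') p := by
  simpa only [neg_one_mul, ← sub_eq_add_neg] using hu.add (hw.const_mul (-1))

lemma fst_mul_snd (hf : HasDerivAt f f' p.1) (hg : ∀ v, HasDerivAt g (g' v) v)
    (hg' : HasDerivAt g' g'' p.2) :
    HasKolmogorovAt (fun q => f q.1 * g q.2) (p.2 * (f' * g p.2) - f p.1 * g'') p :=
  ⟨_, _, _, hf.mul_const (g p.2), .of_forall fun v => (hg v).const_mul (f p.1),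
    hg'.const_mul (f p.1), rfl⟩

lemma comp_fst (hf : HasDerivAt f f' p.1) :
    HasKolmogorovAt (fun q => f q.1) (p.2 * f') p := by
  simpa using fst_mul_snd (g := fun _ => 1) hf (fun v => hasDerivAt_const v 1)
    (hasDerivAt_const p.2 0)

lemma comp_snd (hg : ∀ v, HasDerivAt g (g' v) v) (hg' : HasDerivAt g' g'' p.2) :
    HasKolmogorovAt (fun q => g q.2) (-g'') p := by
  simpa using fst_mul_snd (hasDerivAt_const p.1 1) hg hg'

end HasKolmogorovAt

lemma nonneg_of_isLocalMin_of_hasDerivAt {f f' : ℝ → ℝ} {f'' t : ℝ} (hmin : IsLocalMin f t)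
    (hf : ∀ᶠ y in 𝓝 t, HasDerivAt f (f' y) y) (hf' : HasDerivAt f' f'' t) : 0 ≤ f'' := by
  have hderiv : deriv f =ᶠ[𝓝 t] f' := hf.mono fun y hy => hy.deriv
  have hsecond : deriv (deriv f) t = f'' := by rw [hderiv.deriv_eq, hf'.deriv]
  by_contra! hneg
  have hmax : IsLocalMax f t := isLocalMax_of_deriv_deriv_neg (hsecond ▸ hneg)
    hmin.deriv_eq_zero hf.self_of_nhds.continuousAt
  have hconst : f =ᶠ[𝓝 t] fun _ => f t := by
    filter_upwards [hmin, hmax] with y h₁ h₂ using le_antisymm h₂ h₁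
  have hzero : deriv (deriv f) t = 0 := by rw [hconst.deriv.deriv_eq]; simp
  exact hneg.ne (hsecond ▸ hzero)

lemma sub_mul_nonneg_of_isMinOn {f : ℝ → ℝ} {f' t y : ℝ} {s : Set ℝ} (hs : Convex ℝ s)
    (hmin : IsMinOn f s t) (hf : HasDerivAt f f' t) (ht : t ∈ s) (hy : y ∈ s) :
    0 ≤ (y - t) * f' := by
  simpa using hmin.localize.hasFDerivWithinAt_nonneg hf.hasFDerivAt.hasFDerivWithinAt
    (sub_mem_posTangentConeAt_of_segment_subset (hs.segment_subset ht hy))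

section MinimumPrinciple

variable {u : P2 → ℝ} {L x₀ x₁ a b : ℝ} {p : P2}

lemma HasKolmogorovAt.nonpos_of_isMinOn (hu : HasKolmogorovAt u L p)
    (hmin : IsMinOn u (Icc x₀ x₁ ×ˢ Icc a b) p)
    (hp : p ∈ Icc x₀ x₁ ×ˢ Icc a b) (hpb : p ∉ incomingBoundary x₀ x₁ a b) : L ≤ 0 := by
  obtain ⟨ux, uvv, uv, hux, huv, huvv, rfl⟩ := hu
  obtain ⟨x, v⟩ := p
  obtain ⟨hx, hv⟩ := hp
  simp only [incomingBoundary, mem_ofPred_eq, not_and, not_or] at hpb hx hv hux huv huvv ⊢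
  obtain ⟨hva, hvb, hin, hout⟩ := hpb ⟨hx, hv⟩
  have hsecond : 0 ≤ uvv := by
    refine nonneg_of_isLocalMin_of_hasDerivAt ?_ huv huvv
    filter_upwards [Icc_mem_nhds (hv.1.lt_of_ne' hva) (hv.2.lt_of_ne hvb)] with w hw
    exact isMinOn_iff.1 hmin (x, w) ⟨hx, hw⟩
  have hminx : IsMinOn (fun y => u (y, v)) (Icc x₀ x₁) x :=
    isMinOn_iff.2 fun y hy => isMinOn_iff.1 hmin (y, v) ⟨hy, hv⟩
  have hfirst : ∀ y ∈ Icc x₀ x₁, 0 ≤ (y - x) * ux := fun y hy =>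
    sub_mul_nonneg_of_isMinOn (convex_Icc x₀ x₁) hminx hux hx hy
  have htransport : v * ux ≤ 0 := by
    rcases le_total 0 v with h | h
    · have hlt : x₀ < x := hx.1.lt_of_ne' fun e => hin e h
      exact mul_nonpos_of_nonneg_of_nonpos h
        (nonpos_of_mul_nonneg_right (hfirst x₀ ⟨le_rfl, hx.1.trans hx.2⟩) (sub_neg.2 hlt))
    · have hlt : x < x₁ := hx.2.lt_of_ne fun e => hout e h
      exact mul_nonpos_of_nonpos_of_nonneg h
        (nonneg_of_mul_nonneg_right (hfirst x₁ ⟨hx.1.trans hx.2, le_rfl⟩) (sub_pos.2 hlt))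
  linarith

theorem nonneg_of_hasKolmogorovAt_pos (hu : ContinuousOn u (Icc x₀ x₁ ×ˢ Icc a b))
    (hpos : ∀ p ∈ Icc x₀ x₁ ×ˢ Ioo a b, ∃ L > 0, HasKolmogorovAt u L p)
    (hb : ∀ p ∈ incomingBoundary x₀ x₁ a b, 0 ≤ u p) :
    ∀ p ∈ Icc x₀ x₁ ×ˢ Icc a b, 0 ≤ u p := by
  intro p hp
  obtain ⟨q, hq, hmin⟩ := (isCompact_Icc.prod isCompact_Icc).exists_isMinOn ⟨p, hp⟩ hu
  refine le_trans ?_ (hmin hp)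
  by_cases hqb : q ∈ incomingBoundary x₀ x₁ a b
  · exact hb q hqb
  have hqo : q ∈ Icc x₀ x₁ ×ˢ Ioo a b := by
    refine ⟨hq.1, hq.2.1.lt_of_ne' fun e => hqb ⟨hq, .inl e⟩,
      hq.2.2.lt_of_ne fun e => hqb ⟨hq, .inr (.inl e)⟩⟩
  obtain ⟨L, hL, hqL⟩ := hpos q hqo
  exact absurd (hqL.nonpos_of_isMinOn hmin hq hqb) hL.not_ge

end MinimumPrinciple

/-! ### The self-similar solution -/

/-- The similarity variable `v (9x)^{-1/3}` of the scaling `(x, v) ↦ (r³x, rv)`, normalized so that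
its cube is the argument `v³/(9x)` in the definition of `φ₀`. -/
def similarityVariable (x v : ℝ) : ℝ := v * (9 * x) ^ (-(1:ℝ)/3)

/-- The `x`-derivative `∂ₓφ₀`. -/
def phi0XDeriv (x v : ℝ) : ℝ := x ^ (-(5:ℝ)/6) * phi0XDerivProfile (similarityVariable x v)

section Phi0

variable {x v w : ℝ}

lemma rpow_neg_third_pow_three (hx : 0 < x) : (x ^ (-(1:ℝ)/3)) ^ 3 = x⁻¹ := by
  rw [← Real.rpow_natCast, ← Real.rpow_mul hx.le, ← Real.rpow_neg_one]
  norm_num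

lemma similarityVariable_pow_three (hx : 0 < x) (v : ℝ) :
    similarityVariable x v ^ 3 = v ^ 3 / (9 * x) := by
  rw [similarityVariable, mul_pow, rpow_neg_third_pow_three (by positivity), div_eq_mul_inv]

lemma similarityVariable_mono (hx : 0 < x) : Monotone (similarityVariable x) :=
  fun _ _ h => mul_le_mul_of_nonneg_right h (by positivity)

lemma similarityVariable_neg_iff (hx : 0 < x) : similarityVariable x v < 0 ↔ v < 0 :=
  have hscale : 0 < (9 * x) ^ (-(1:ℝ)/3) := by positivity
  ⟨fun h => neg_of_mul_neg_left h hscale.le, fun h => mul_neg_of_neg_of_pos h hscale⟩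

lemma hasDerivAt_similarityVariable_fst (hx : 0 < x) (v : ℝ) :
    HasDerivAt (similarityVariable · v) (-similarityVariable x v / (3 * x)) x := by
  have hscale : HasDerivAt (fun x : ℝ => 9 * x) 9 x := by
    simpa using (hasDerivAt_id x).const_mul (9:ℝ)
  refine ((hscale.rpow_const (.inl (by positivity))).const_mul v).congr_deriv ?_
  rw [Real.rpow_sub_one (by positivity), similarityVariable]
  field_simp

lemma hasDerivAt_similarityVariable_snd (x v : ℝ) :
    HasDerivAt (similarityVariable x) ((9 * x) ^ (-(1:ℝ)/3)) v :=
  hasDerivAt_mul_const _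

lemma phi0_eq (hx : 0 < x) (v : ℝ) :
    phi0 x v = x ^ ((1:ℝ)/6) * phi0Profile (similarityVariable x v) := by
  simp only [phi0, phi0Profile, similarityVariable_neg_iff hx, similarityVariable_pow_three hx,
    neg_div]
  split_ifs <;> ring

lemma phi0_zero_right (hx : 0 < x) : phi0 x 0 = x ^ ((1:ℝ)/6) * phi0Profile 0 := by
  rw [phi0_eq hx, similarityVariable, zero_mul]

lemma phi0_pos (hx : 0 < x) (v : ℝ) : 0 < phi0 x v := by
  rw [phi0_eq hx]
  exact mul_pos (by positivity) (phi0Profile_pos _)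

lemma phi0_antitone (hx : 0 < x) : Antitone (phi0 x) := fun v w h => by
  rw [phi0_eq hx, phi0_eq hx]
  exact mul_le_mul_of_nonneg_left (phi0Profile_antitone (similarityVariable_mono hx h))
    (by positivity)

lemma phi0XDeriv_nonneg (hx : 0 < x) (v : ℝ) : 0 ≤ phi0XDeriv x v :=
  mul_nonneg (by positivity) (phi0XDerivProfile_nonneg _)

lemma phi0XDeriv_eq (hx : 0 < x) (v : ℝ) :
    phi0XDeriv x v = x ^ ((1:ℝ)/6) / x * phi0XDerivProfile (similarityVariable x v) := by
  rw [phi0XDeriv, ← Real.rpow_sub_one hx.ne']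
  norm_num

lemma hasDerivAt_phi0_fst (hx : 0 < x) (v : ℝ) :
    HasDerivAt (phi0 · v) (phi0XDeriv x v) x := by
  have hprofile := (hasDerivAt_phi0Profile (similarityVariable x v)).comp x
    (hasDerivAt_similarityVariable_fst hx v)
  have hpow := Real.hasDerivAt_rpow_const (p := (1:ℝ)/6) (.inl hx.ne')
  have heq : (phi0 · v) =ᶠ[𝓝 x]
      fun y => y ^ ((1:ℝ)/6) * phi0Profile (similarityVariable y v) := by
    filter_upwards [Ioi_mem_nhds hx] with y hy using phi0_eq hy v
  refine ((hpow.mul hprofile).congr_of_eventuallyEq heq).congr_deriv ?_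
  rw [phi0XDeriv_eq hx, phi0XDerivProfile, Real.rpow_sub_one hx.ne', Function.comp_apply]
  field_simp
  ring

lemma hasKolmogorovAt_phi0 {p : P2} (hp : 0 < p.1) :
    HasKolmogorovAt (fun q => phi0 q.1 q.2) 0 p := by
  obtain ⟨x, v⟩ := p
  refine ⟨_, _, fun v => x ^ ((1:ℝ)/6) *
      (phi0ProfileDeriv (similarityVariable x v) * (9 * x) ^ (-(1:ℝ)/3)),
    hasDerivAt_phi0_fst hp v, .of_forall fun v => ?_,
    (((hasDerivAt_phi0ProfileDeriv _).comp v (hasDerivAt_similarityVariable_snd x v)).mul_const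
      _).const_mul _, ?_⟩
  · exact (((hasDerivAt_phi0Profile _).comp v (hasDerivAt_similarityVariable_snd x v)).const_mul
      (x ^ ((1:ℝ)/6))).congr_of_eventuallyEq (.of_forall (phi0_eq hp))
  · have hcube : ((9 * x) ^ (-(1:ℝ)/3)) ^ 3 * (9 * x) = 1 := by
      rw [rpow_neg_third_pow_three (mul_pos (by norm_num) hp), inv_mul_cancel₀ (by positivity)]
    simp only [phi0XDeriv_eq hp, similarityVariable]
    set c := (9 * x) ^ (-(1:ℝ)/3)
    have hx : x ≠ 0 := ne_of_gt hp
    field_simp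
    linear_combination (-(v * x ^ ((1:ℝ)/6) * phi0XDerivProfile (v * c))) * hcube

lemma continuousOn_phi0 : ContinuousOn (fun p : P2 => phi0 p.1 p.2) (Ioi 0 ×ˢ univ) := by
  have hprofile : Continuous phi0Profile :=
    continuous_iff_continuousAt.2 fun t => (hasDerivAt_phi0Profile t).continuousAt
  refine ContinuousOn.congr (f := fun p : P2 => p.1 ^ ((1:ℝ)/6) *
    phi0Profile (p.2 * (9 * p.1) ^ (-(1:ℝ)/3))) ?_ fun p hp => phi0_eq hp.1 p.2
  refine .mul (continuousOn_fst.rpow_const fun p hp => .inl (ne_of_gt hp.1))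
    (hprofile.comp_continuousOn (continuousOn_snd.mul ?_))
  exact (continuousOn_const.mul continuousOn_fst).rpow_const
    fun p hp => .inl (mul_pos (by norm_num : (0:ℝ) < 9) hp.1).ne'

lemma monotoneOn_phi0 (v : ℝ) : MonotoneOn (phi0 · v) (Ioi 0) := by
  refine monotoneOn_of_hasDerivWithinAt_nonneg (f' := (phi0XDeriv · v)) (convex_Ioi 0)
    (fun x hx => (hasDerivAt_phi0_fst hx v).continuousAt.continuousWithinAt) ?_ ?_ <;>
    rw [interior_Ioi]
  · exact fun x hx => (hasDerivAt_phi0_fst hx v).hasDerivWithinAt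
  · exact fun x hx => phi0XDeriv_nonneg hx v

lemma exists_phi0XDeriv_le (hv : 0 < v) (r : ℝ) :
    ∃ M, ∀ x ∈ Ioc 0 r, phi0XDeriv x v ≤ M := by
  obtain ⟨C, hC, hΘ⟩ := exists_pow_three_mul_phi0XDerivProfile_le
  refine ⟨9 / v ^ 3 * r ^ ((1:ℝ)/6) * C, fun x hx => ?_⟩
  have hx0 : 0 < x := hx.1
  calc phi0XDeriv x v
      = 9 / v ^ 3 * x ^ ((1:ℝ)/6) *
          (similarityVariable x v ^ 3 * phi0XDerivProfile (similarityVariable x v)) := by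
        rw [phi0XDeriv_eq hx0, similarityVariable_pow_three hx0]
        field_simp
    _ ≤ 9 / v ^ 3 * x ^ ((1:ℝ)/6) * C := by gcongr; exact hΘ _
    _ ≤ 9 / v ^ 3 * r ^ ((1:ℝ)/6) * C := by gcongr; exact hx.2

lemma phi0_le_exp_mul (hx : 0 < x) (hv : 0 ≤ v) (hvw : v ≤ w) :
    phi0 x w ≤ Real.exp ((v ^ 3 - w ^ 3) / (9 * x)) * phi0 x v := by
  have hs : 0 ≤ similarityVariable x v :=
    not_lt.1 fun h => ((similarityVariable_neg_iff hx).1 h).not_ge hv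
  have h := phi0Profile_le_exp_mul hs (similarityVariable_mono hx hvw)
  rw [similarityVariable_pow_three hx, similarityVariable_pow_three hx, ← sub_div] at h
  rw [phi0_eq hx, phi0_eq hx, mul_left_comm]
  gcongr

lemma tendsto_phi0_zero_right : Tendsto (phi0 · 0) (𝓝[>] 0) (𝓝 0) := by
  have h : Tendsto (fun x : ℝ => x ^ ((1:ℝ)/6) * phi0Profile 0) (𝓝 0) (𝓝 0) := by
    simpa using ((Real.continuousAt_rpow_const 0 ((1:ℝ)/6) (.inr (by norm_num))).mul_const
      (phi0Profile 0)).tendsto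
  refine (h.mono_left nhdsWithin_le_nhds).congr' ?_
  filter_upwards [self_mem_nhdsWithin] with x hx using (phi0_zero_right hx).symm

end Phi0

open ContinuousLinearMap (mul)
open scoped ContDiff Convolution

/-! ### Mollification of weak supersolutions -/

/-- The derivative `∂ₑψ` in the direction `e`; `e = (1, 0)` and `e = (0, 1)` give `∂ₓ` and `∂ᵥ`. -/
def dirDeriv (e : P2) (ψ : P2 → ℝ) (p : P2) : ℝ := fderiv ℝ ψ p e

/-- `h` is a distributional supersolution, `v ∂ₓh - ∂ᵥᵥh ≥ 0`, on the open set `D`. -/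
def IsKolmogorovSupersolution (D : Set P2) (h : P2 → ℝ) : Prop :=
  ∀ ψ : P2 → ℝ, ContDiff ℝ ∞ ψ → HasCompactSupport ψ → tsupport ψ ⊆ D → (∀ p, 0 ≤ ψ p) →
    (∫ p in D, h p * (p.2 * dirDeriv (1, 0) ψ p)) +
      ∫ p in D, h p * dirDeriv (0, 1) (dirDeriv (0, 1) ψ) p ≤ 0

/-- Mollification kernels supported at scale `δ`, for which the commutator of mollification with
the coefficient `v` of `∂ₓ` has size `ε`. -/
structure IsMollifier (δ ε : ℝ) (k : P2 → ℝ) : Prop where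
  contDiff : ContDiff ℝ ∞ k
  nonneg : ∀ p, 0 ≤ k p
  integral_eq_one : ∫ p, k p = 1
  tsupport_subset : tsupport k ⊆ Metric.ball 0 δ
  commutator_le : ∫ p, |p.2 * dirDeriv (1, 0) k p| ≤ ε

/-- The convolution `G ⋆ k` of a function `G` on phase space with a kernel `k`. -/
def mollify (G k : P2 → ℝ) : P2 → ℝ := G ⋆[mul ℝ ℝ, volume] k

section Mollification

variable {D K : Set P2} {G f h k ψ : P2 → ℝ} {δ ε M R : ℝ} {p : P2}

lemma contDiff_dirDeriv (hψ : ContDiff ℝ ∞ ψ) (e : P2) : ContDiff ℝ ∞ (dirDeriv e ψ) :=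
  (hψ.fderiv_right le_rfl).clm_apply contDiff_const

lemma hasCompactSupport_dirDeriv (hψ : HasCompactSupport ψ) (e : P2) :
    HasCompactSupport (dirDeriv e ψ) :=
  hψ.fderiv_apply ℝ e

lemma tsupport_dirDeriv_subset (e : P2) : tsupport (dirDeriv e ψ) ⊆ tsupport ψ :=
  tsupport_fderiv_apply_subset ℝ e

lemma dirDeriv_neg (e : P2) : dirDeriv e (fun q => -ψ q) = fun q => -dirDeriv e ψ q := by
  funext q
  simp [dirDeriv, fderiv_fun_neg]

lemma dirDeriv_comp_const_sub (hψ : Differentiable ℝ ψ) (p e : P2) :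
    dirDeriv e (fun q => ψ (p - q)) = fun q => -dirDeriv e ψ (p - q) := by
  funext q
  have h : HasFDerivAt (fun q => ψ (p - q)) _ q :=
    (hψ (p - q)).hasFDerivAt.comp q ((hasFDerivAt_id q).const_sub p)
  rw [dirDeriv, h.fderiv]
  simp [dirDeriv]

lemma HasKolmogorovAt.of_contDiff (hψ : ContDiff ℝ ∞ ψ) (p : P2) :
    HasKolmogorovAt ψ
      (p.2 * dirDeriv (1, 0) ψ p - dirDeriv (0, 1) (dirDeriv (0, 1) ψ) p) p := by
  have hslice {φ : P2 → ℝ} (hφ : ContDiff ℝ ∞ φ) (v : ℝ) :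
      HasDerivAt (fun v => φ (p.1, v)) (dirDeriv (0, 1) φ (p.1, v)) v :=
    ((hφ.differentiable (by simp)).differentiableAt.hasFDerivAt (x := (p.1, v))).comp_hasDerivAt v
      ((hasDerivAt_const v p.1).prodMk (hasDerivAt_id v))
  exact ⟨_, _, _,
    ((hψ.differentiable (by simp)).differentiableAt.hasFDerivAt (x := p)).comp_hasDerivAt p.1
      ((hasDerivAt_id p.1).prodMk (hasDerivAt_const p.1 p.2)),
    Eventually.of_forall (hslice hψ), hslice (contDiff_dirDeriv hψ _) p.2, rfl⟩

lemma IsWeakSolRect.isKolmogorovSupersolution {hv : P2 → ℝ} (hh : IsWeakSolRect R h hv) :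
    IsKolmogorovSupersolution (Hrect R) h := by
  intro ψ hψ hψc hψs _
  obtain ⟨-, -, hweak, hsol⟩ := hh
  have hv_eq := hweak (dirDeriv (0, 1) ψ) (contDiff_dirDeriv hψ _)
    (hasCompactSupport_dirDeriv hψc _) ((tsupport_dirDeriv_subset _).trans hψs)
  have hsol_eq := hsol ψ hψ hψc (hψs.trans (prod_mono Ioo_subset_Ico_self subset_rfl))
    fun p hp => absurd hp.2 (hψs hp.1).1.1.ne'
  simp only [dirDeriv] at hv_eq hsol_eq ⊢
  linarith

lemma integrable_mul_comp_const_sub (hG : LocallyIntegrable G) (hf : Continuous f)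
    (hfc : HasCompactSupport f) (p : P2) : Integrable fun q => G q * f (p - q) :=
  hfc.convolutionExists_right (mul ℝ ℝ) hG hf p

lemma contDiff_mollify (hG : LocallyIntegrable G) (hk : ContDiff ℝ ∞ k)
    (hkc : HasCompactSupport k) : ContDiff ℝ ∞ (mollify G k) :=
  hkc.contDiff_convolution_right _ hG hk

lemma dirDeriv_mollify (hG : LocallyIntegrable G) (hk : ContDiff ℝ ∞ k)
    (hkc : HasCompactSupport k) (e : P2) :
    dirDeriv e (mollify G k) = mollify G (dirDeriv e k) := by
  funext p
  have hderiv := hkc.hasFDerivAt_convolution_right (mul ℝ ℝ) hG (hk.of_le (by simp)) p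
  exact (congrArg (· e) hderiv.fderiv).trans
    (convolution_precompR_apply _ hG (hkc.fderiv ℝ) (hk.continuous_fderiv (by simp)) p e)

lemma abs_mollify_le (hM : ∀ q, |G q| ≤ M) (hf : Integrable f) :
    |mollify G f p| ≤ M * ∫ q, |f q| := by
  have hbound : ∀ q, ‖G q * f (p - q)‖ ≤ M * |f (p - q)| := fun q => by
    rw [norm_mul, Real.norm_eq_abs, Real.norm_eq_abs]
    exact mul_le_mul_of_nonneg_right (hM q) (abs_nonneg _)
  calc |mollify G f p| ≤ ∫ q, M * |f (p - q)| :=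
        norm_integral_le_of_norm_le ((hf.abs.comp_sub_left p).const_mul M) (.of_forall hbound)
    _ = M * ∫ q, |f q| := by
        rw [integral_const_mul, integral_sub_left_eq_self (fun q => |f q|)]

lemma mollify_snd_mul (hG : LocallyIntegrable G) (hf : Continuous f) (hfc : HasCompactSupport f) :
    mollify G (fun q => q.2 * f q) p =
      p.2 * mollify G f p - ∫ q, G q * (q.2 * f (p - q)) := by
  have h₁ := integrable_mul_comp_const_sub hG hf hfc p
  have h₂ := integrable_mul_comp_const_sub hG (f := fun q => q.2 * f q) (by fun_prop)
    (hfc.mul_left) p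
  have h₃ : ∀ q, G q * (q.2 * f (p - q)) =
      p.2 * (G q * f (p - q)) - G q * ((p - q).2 * f (p - q)) := fun q => by
    rw [Prod.snd_sub]; ring
  simp only [h₃]
  rw [integral_sub (h₁.const_mul _) h₂, integral_const_mul]
  simp only [mollify, convolution_def, ContinuousLinearMap.mul_apply']
  ring

lemma IsMollifier.hasCompactSupport (hk : IsMollifier δ ε k) : HasCompactSupport k :=
  (isCompact_closedBall 0 δ).of_isClosed_subset (isClosed_tsupport k)
    (hk.tsupport_subset.trans Metric.ball_subset_closedBall)

lemma tsupport_comp_const_sub_subset_ball (hk : tsupport k ⊆ Metric.ball 0 δ) :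
    tsupport (fun q => k (p - q)) ⊆ Metric.ball p δ := by
  intro q hq
  have : q ∈ Homeomorph.subLeft p ⁻¹' tsupport k :=
    tsupport_comp_eq_preimage k (Homeomorph.subLeft p) ▸ hq
  simpa [dist_eq_norm, norm_sub_rev] using hk this

lemma setIntegral_mul_eq_of_tsupport_subset (hGh : EqOn G h (Metric.ball p δ))
    (hD : Metric.ball p δ ⊆ D) (hf : tsupport f ⊆ Metric.ball p δ) :
    ∫ q in D, h q * f q = ∫ q, G q * f q := by
  have hzero : ∀ q ∉ Metric.ball p δ, f q = 0 := fun q hq =>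
    image_eq_zero_of_notMem_tsupport fun hq' => hq (hf hq')
  rw [setIntegral_eq_integral_of_forall_compl_eq_zero
    fun q hq => by rw [hzero q fun hq' => hq (hD hq'), mul_zero]]
  congr 1 with q
  by_cases hq : q ∈ Metric.ball p δ
  · rw [hGh hq]
  · rw [hzero q hq, mul_zero, mul_zero]

/- Test the inequality with `q ↦ k (p - q)`: the operator passes to the kernel, except that the
coefficient is `q.2` where `p.2` is wanted. -/
lemma IsKolmogorovSupersolution.neg_mul_le_mollify (hh : IsKolmogorovSupersolution D h)
    (hk : IsMollifier δ ε k) (hG : LocallyIntegrable G) (hM : ∀ q, |G q| ≤ M)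
    (hGh : EqOn G h (Metric.ball p δ)) (hD : Metric.ball p δ ⊆ D) :
    -(M * ε) ≤ p.2 * dirDeriv (1, 0) (mollify G k) p -
      dirDeriv (0, 1) (dirDeriv (0, 1) (mollify G k)) p := by
  have hks := hk.contDiff
  have hkc := hk.hasCompactSupport
  have hkx := contDiff_dirDeriv hks (1, 0)
  have hkv := contDiff_dirDeriv hks (0, 1)
  have hsupp : tsupport (fun q => k (p - q)) ⊆ Metric.ball p δ :=
    tsupport_comp_const_sub_subset_ball hk.tsupport_subset
  have htest := hh (fun q => k (p - q)) (hks.comp (contDiff_const.sub contDiff_id))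
    (hkc.comp_homeomorph (Homeomorph.subLeft p)) (hsupp.trans hD) fun q => hk.nonneg _
  rw [setIntegral_mul_eq_of_tsupport_subset hGh hD
      ((tsupport_mul_subset_right).trans ((tsupport_dirDeriv_subset _).trans hsupp)),
    setIntegral_mul_eq_of_tsupport_subset hGh hD
      ((tsupport_dirDeriv_subset _).trans ((tsupport_dirDeriv_subset _).trans hsupp)),
    dirDeriv_comp_const_sub (hks.differentiable (by simp)),
    dirDeriv_comp_const_sub (hks.differentiable (by simp)), dirDeriv_neg,
    dirDeriv_comp_const_sub (hkv.differentiable (by simp))] at htest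
  simp only [mul_neg, neg_neg, integral_neg] at htest
  have hcomm := mollify_snd_mul (p := p) hG hkx.continuous (hasCompactSupport_dirDeriv hkc (1, 0))
  have herr : |mollify G (fun q => q.2 * dirDeriv (1, 0) k q) p| ≤ M * ε :=
    (abs_mollify_le hM <| (continuous_snd.mul hkx.continuous).integrable_of_hasCompactSupport
      (hasCompactSupport_dirDeriv hkc (1, 0)).mul_left).trans
      (mul_le_mul_of_nonneg_left hk.commutator_le ((abs_nonneg _).trans (hM p)))
  rw [dirDeriv_mollify hG hks hkc, dirDeriv_mollify hG hks hkc,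
    dirDeriv_mollify hG hkv (hasCompactSupport_dirDeriv hkc _)]
  have hvv : mollify G (dirDeriv (0, 1) (dirDeriv (0, 1) k)) p =
    ∫ q, G q * dirDeriv (0, 1) (dirDeriv (0, 1) k) (p - q) := rfl
  linarith [neg_le_of_abs_le herr]

lemma IsMollifier.abs_mollify_sub_le (hk : IsMollifier δ ε k) {d z : ℝ} (hd : 0 ≤ d)
    (hG : AEStronglyMeasurable G) (hGz : ∀ q ∈ Metric.ball p δ, |G q - z| ≤ d) :
    |mollify G k p - z| ≤ d := by
  have hswap : mollify G k p = (k ⋆[ContinuousLinearMap.lsmul ℝ ℝ, volume] G) p := by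
    rw [mollify, convolution_mul_swap]
    simp only [convolution_def, ContinuousLinearMap.lsmul_apply, smul_eq_mul, mul_comm]
  rw [hswap, ← Real.dist_eq]
  exact dist_convolution_le hd ((subset_tsupport k).trans hk.tsupport_subset) hk.nonneg
    hk.integral_eq_one hG hGz

lemma exists_contDiff_bump {r : ℝ} (hr : 0 < r) : ∃ α : ℝ → ℝ, ContDiff ℝ ∞ α ∧
    (∀ t, 0 ≤ α t) ∧ ∫ t, α t = 1 ∧ tsupport α ⊆ Metric.closedBall 0 r := by
  let f : ContDiffBump (0 : ℝ) := ⟨r / 2, r, half_pos hr, half_lt_self hr⟩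
  exact ⟨f.normed volume, f.contDiff_normed, fun t => f.nonneg_normed t, f.integral_normed,
    f.tsupport_normed_eq.subset⟩

lemma dirDeriv_fst_mul_snd {α β : ℝ → ℝ} (hα : Differentiable ℝ α) (hβ : Differentiable ℝ β)
    (p : P2) :
    dirDeriv (1, 0) (fun q => α q.1 * β q.2) p = deriv α p.1 * β p.2 := by
  have h₁ := (hα p.1).hasDerivAt.comp_hasFDerivAt p (hasFDerivAt_fst (𝕜 := ℝ) (p := p))
  have h₂ := (hβ p.2).hasDerivAt.comp_hasFDerivAt p (hasFDerivAt_snd (𝕜 := ℝ) (p := p))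
  have h : HasFDerivAt (fun q : P2 => α q.1 * β q.2) _ p := h₁.mul h₂
  rw [dirDeriv, h.fderiv]
  simp [mul_comm]

lemma integral_abs_mul_le {β : ℝ → ℝ} {r : ℝ} (hβ : Continuous β) (hβ₀ : ∀ t, 0 ≤ β t)
    (hβ₁ : ∫ t, β t = 1) (hβr : tsupport β ⊆ Metric.closedBall 0 r) :
    ∫ t, |t * β t| ≤ r := by
  have hβc : HasCompactSupport β :=
    (isCompact_closedBall 0 r).of_isClosed_subset (isClosed_tsupport β) hβr
  have hint : Integrable fun t => |t * β t| :=
    (continuous_id.mul hβ).abs.integrable_of_hasCompactSupport hβc.mul_left.abs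
  calc ∫ t, |t * β t| ≤ ∫ t, r * β t := by
        refine integral_mono hint ((hβ.integrable_of_hasCompactSupport hβc).const_mul r) fun t => ?_
        by_cases ht : t ∈ tsupport β
        · have : |t| ≤ r := by simpa using hβr ht
          simpa only [abs_mul, abs_of_nonneg (hβ₀ t)] using
            mul_le_mul_of_nonneg_right this (hβ₀ t)
        · simp [image_eq_zero_of_notMem_tsupport ht]
    _ = r := by rw [integral_const_mul, hβ₁, mul_one]

/- The scale of the kernel in `v` is chosen after its profile in `x`. -/
lemma exists_isMollifier (hδ : 0 < δ) (hε : 0 < ε) : ∃ k, IsMollifier δ ε k := by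
  obtain ⟨α, hα, hα₀, hα₁, hαδ⟩ := exists_contDiff_bump (half_pos hδ)
  set A := ∫ t, |deriv α t|
  have : 0 ≤ A := integral_nonneg fun _ => abs_nonneg _
  set r := min (δ / 2) (ε / (A + 1))
  obtain ⟨β, hβ, hβ₀, hβ₁, hβr⟩ := exists_contDiff_bump (r := r) (by positivity)
  have hdα := hα.differentiable (by simp)
  have hdβ := hβ.differentiable (by simp)
  refine ⟨fun p => α p.1 * β p.2, (hα.comp contDiff_fst).mul (hβ.comp contDiff_snd),
    fun p => mul_nonneg (hα₀ _) (hβ₀ _), ?_, ?_, ?_⟩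
  · rw [Measure.volume_eq_prod, integral_prod_mul α β, hα₁, hβ₁, one_mul]
  · refine (closure_minimal (t := Metric.closedBall 0 (δ / 2)) (fun p hp => ?_)
      Metric.isClosed_closedBall).trans (Metric.closedBall_subset_ball (half_lt_self hδ))
    have h₁ := hαδ (subset_tsupport _ (left_ne_zero_of_mul hp))
    have h₂ := Metric.closedBall_subset_closedBall (min_le_left _ _)
      (hβr (subset_tsupport _ (right_ne_zero_of_mul hp)))
    exact (closedBall_prod_same (0 : ℝ) (0 : ℝ) (δ / 2)).subset ⟨h₁, h₂⟩
  · have hprod : ∀ p : P2, |p.2 * dirDeriv (1, 0) (fun q => α q.1 * β q.2) p| =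
        |deriv α p.1| * |p.2 * β p.2| := fun p => by
      rw [dirDeriv_fst_mul_snd hdα hdβ, ← abs_mul]
      ring_nf
    simp only [hprod]
    calc ∫ p : P2, |deriv α p.1| * |p.2 * β p.2| = A * ∫ t, |t * β t| :=
          integral_prod_mul (fun t => |deriv α t|) (fun t => |t * β t|)
      _ ≤ (A + 1) * (ε / (A + 1)) := by
          have := (integral_abs_mul_le hβ.continuous hβ₀ hβ₁ hβr).trans (min_le_right _ _)
          gcongr
          linarith
      _ = ε := mul_div_cancel₀ ε (by positivity)

/- Mollify the restriction of `h` to a compact neighbourhood of `K`. -/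
lemma IsKolmogorovSupersolution.exists_smooth_approx (hh : IsKolmogorovSupersolution D h)
    (hc : ContinuousOn h D) (hD : IsOpen D) (hK : IsCompact K) (hKD : K ⊆ D) (hε : 0 < ε) :
    ∃ H L : P2 → ℝ, Continuous H ∧ (∀ p, HasKolmogorovAt H (L p) p) ∧
      ∀ p ∈ K, |H p - h p| ≤ ε ∧ -ε ≤ L p := by
  obtain ⟨δ₀, hδ₀, hδD⟩ := hK.exists_cthickening_subset_open hD hKD
  set K' := Metric.cthickening δ₀ K
  have hK' : IsCompact K' := hK.cthickening
  have hcK' : ContinuousOn h K' := hc.mono hδD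
  obtain ⟨M, hM⟩ := hK'.exists_bound_of_continuousOn hcK'
  obtain ⟨η, hη, hunif⟩ := Metric.uniformContinuousOn_iff.1
    (hK'.uniformContinuousOn_of_continuous hcK') ε hε
  set δ := min δ₀ η
  obtain ⟨k, hk⟩ := exists_isMollifier (δ := δ) (ε := ε / (|M| + 1)) (by positivity) (by positivity)
  set G := K'.indicator h
  have hG : Integrable G :=
    (hcK'.integrableOn_compact hK').integrable_indicator hK'.measurableSet
  have hGM : ∀ q, |G q| ≤ |M| := fun q => by
    by_cases hq : q ∈ K'
    · simpa only [G, indicator_of_mem hq, Real.norm_eq_abs] using (hM q hq).trans (le_abs_self M)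
    · simp [G, indicator_of_notMem hq]
  refine ⟨mollify G k, _, (contDiff_mollify hG.locallyIntegrable hk.contDiff
    hk.hasCompactSupport).continuous, .of_contDiff (contDiff_mollify hG.locallyIntegrable
    hk.contDiff hk.hasCompactSupport), fun p hp => ?_⟩
  have hball : Metric.ball p δ ⊆ K' := (Metric.ball_subset_closedBall.trans
    (Metric.closedBall_subset_closedBall (min_le_left _ _))).trans
    (Metric.closedBall_subset_cthickening hp δ₀)
  have hGh : EqOn G h (Metric.ball p δ) := fun q hq => indicator_of_mem (hball hq) h
  constructor
  · refine hk.abs_mollify_sub_le hε.le hG.aestronglyMeasurable fun q hq => ?_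
    rw [hGh hq]
    exact (hunif q (hball hq) p (Metric.self_subset_cthickening K hp)
      (hq.trans_le (min_le_right _ _))).le
  · refine le_trans ?_ (hh.neg_mul_le_mollify hk hG.locallyIntegrable hGM hGh (hball.trans hδD))
    have : |M| * (ε / (|M| + 1)) ≤ (|M| + 1) * (ε / (|M| + 1)) := by gcongr; linarith
    rw [mul_div_cancel₀ ε (by positivity)] at this
    linarith

end Mollification

/-! ### Comparison and barriers -/

lemma hasDerivAt_max_neg_zero_pow (n : ℕ) (v : ℝ) : HasDerivAt (fun v : ℝ => max (-v) 0 ^ (n + 2))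
    (-((n + 2 : ℕ) : ℝ) * max (-v) 0 ^ (n + 1)) v := by
  rcases lt_trichotomy v 0 with hv | rfl | hv
  · rw [max_eq_left (neg_nonneg.2 hv.le)]
    have hpow : HasDerivAt (fun v : ℝ => (-v) ^ (n + 2)) (-((n + 2 : ℕ) : ℝ) * (-v) ^ (n + 1)) v :=
      ((hasDerivAt_neg v).pow (n + 2)).congr_deriv (by simp; ring)
    refine hpow.congr_of_eventuallyEq ?_
    filter_upwards [Iio_mem_nhds hv] with w hw
    rw [max_eq_left (neg_nonneg.2 (mem_Iio.1 hw).le)]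
  · have hpow : HasDerivAt (fun v : ℝ => v ^ (n + 2)) 0 0 := by
      simpa using hasDerivAt_pow (n + 2) (0 : ℝ)
    rw [neg_zero, max_self, zero_pow n.succ_ne_zero, mul_zero]
    rw [hasDerivAt_iff_isLittleO_nhds_zero] at hpow ⊢
    refine (Asymptotics.IsBigO.of_bound 1 (.of_forall fun w => ?_)).trans_isLittleO hpow
    have : |max (-w) 0| ≤ |w| := by
      rw [abs_of_nonneg (le_max_right _ _)]
      exact max_le (neg_le_abs w) (abs_nonneg w)
    simpa using pow_le_pow_left₀ (abs_nonneg _) this (n + 2)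
  · rw [max_eq_right (neg_nonpos.2 hv.le), zero_pow n.succ_ne_zero, mul_zero]
    refine (hasDerivAt_const v (0 : ℝ)).congr_of_eventuallyEq ?_
    filter_upwards [Ioi_mem_nhds hv] with w hw
    rw [max_eq_right (neg_nonpos.2 (mem_Ioi.1 hw).le), zero_pow (by omega)]

/-- The barrier `φ₀(x, v) - φ₀(x, b) + (M/6) max(-v, 0)³ - d`, a subsolution when
`∂ₓφ₀(·, b) ≤ M`: the cubic term compensates for `φ₀(x, b)` where `v < 0`. -/
def phi0Barrier (M b d : ℝ) (p : P2) : ℝ :=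
  phi0 p.1 p.2 - phi0 p.1 b + M / 6 * max (-p.2) 0 ^ 3 - d

lemma hasKolmogorovAt_phi0Barrier (M b d : ℝ) {p : P2} (hp : 0 < p.1) :
    HasKolmogorovAt (phi0Barrier M b d)
      (-(p.2 * phi0XDeriv p.1 b + M * max (-p.2) 0)) p := by
  have hcubic : HasKolmogorovAt (fun q => max (-q.2) 0 ^ 3) (-(6 * max (-p.2) 0)) p := by
    refine .comp_snd (fun v => hasDerivAt_max_neg_zero_pow 1 v) ?_
    refine ((hasDerivAt_max_neg_zero_pow 0 p.2).const_mul (-((1 + 2 : ℕ) : ℝ))).congr_deriv ?_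
    norm_num
    ring
  convert (((hasKolmogorovAt_phi0 hp).sub (.comp_fst (hasDerivAt_phi0_fst hp b))).add
    (hcubic.const_mul (M / 6))).sub (.comp_fst (hasDerivAt_const p.1 d)) using 1
  · rfl
  · ring

lemma exists_nonpos_hasKolmogorovAt_phi0Barrier {M b : ℝ} (d : ℝ) {p : P2} (hp : 0 < p.1)
    (hM : phi0XDeriv p.1 b ≤ M) : ∃ L ≤ 0, HasKolmogorovAt (phi0Barrier M b d) L p := by
  refine ⟨_, ?_, hasKolmogorovAt_phi0Barrier M b d hp⟩
  have := phi0XDeriv_nonneg hp b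
  rcases le_total p.2 0 with hv | hv
  · rw [max_eq_left (neg_nonneg.2 hv)]
    nlinarith
  · rw [max_eq_right (neg_nonpos.2 hv)]
    nlinarith

lemma continuousOn_phi0Barrier (M b d : ℝ) :
    ContinuousOn (phi0Barrier M b d) (Ioi 0 ×ˢ univ) := by
  have hb : ContinuousOn (fun p : P2 => phi0 p.1 b) (Ioi 0 ×ˢ univ) :=
    continuousOn_phi0.comp (f := fun p : P2 => (p.1, b)) (by fun_prop)
      fun p hp => ⟨hp.1, mem_univ _⟩
  exact ((continuousOn_phi0.sub hb).add (by fun_prop)).sub continuousOn_const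

section Comparison

variable {D : Set P2} {h W : P2 → ℝ} {x₀ x₁ a b c θ κ μ ρ δ M X x v : ℝ}

/- Mollifying `h` perturbs the operator by less than the strict gain `2ε` of the term `-ε v²`. -/
lemma IsKolmogorovSupersolution.ge_of_ge_on_incomingBoundary
    (hh : IsKolmogorovSupersolution D h) (hc : ContinuousOn h D) (hD : IsOpen D)
    (hbox : Icc x₀ x₁ ×ˢ Icc a b ⊆ D) (hW : ContinuousOn W (Icc x₀ x₁ ×ˢ Icc a b))
    (hsub : ∀ p ∈ Icc x₀ x₁ ×ˢ Ioo a b, ∃ L ≤ 0, HasKolmogorovAt W L p)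
    (hbdry : ∀ p ∈ incomingBoundary x₀ x₁ a b, W p ≤ h p) :
    ∀ p ∈ Icc x₀ x₁ ×ˢ Icc a b, W p ≤ h p := by
  have hsq : ∀ p ∈ Icc x₀ x₁ ×ˢ Icc a b, p.2 ^ 2 ≤ a ^ 2 + b ^ 2 := fun p hp => by
    rcases le_total 0 p.2 with hv | hv <;> nlinarith [hp.2.1, hp.2.2]
  intro p hp
  refine le_of_forall_pos_le_add fun η hη => ?_
  set ε := η / (2 + a ^ 2 + b ^ 2)
  have hε : 0 < ε := by positivity
  obtain ⟨H, L, hH, hHL, happrox⟩ :=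
    hh.exists_smooth_approx hc hD (isCompact_Icc.prod isCompact_Icc) hbox hε
  have hu : 0 ≤ H p - W p + ε * (1 + a ^ 2 + b ^ 2 - p.2 ^ 2) := by
    refine nonneg_of_hasKolmogorovAt_pos
      (u := fun q => H q - W q + ε * (1 + a ^ 2 + b ^ 2 - q.2 ^ 2))
      ((hH.continuousOn.sub hW).add (by fun_prop)) (fun q hq => ?_) (fun q hq => ?_) p hp
    · obtain ⟨L', hL', hqW⟩ := hsub q hq
      have hquad := HasKolmogorovAt.comp_snd (p := q)
        (fun v => ((hasDerivAt_pow 2 v).const_sub (1 + a ^ 2 + b ^ 2)))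
        (((hasDerivAt_pow 1 q.2).const_mul 2).neg)
      refine ⟨_, ?_, ((hHL q).sub hqW).add (hquad.const_mul ε)⟩
      have := (happrox q ⟨hq.1, Ioo_subset_Icc_self hq.2⟩).2
      norm_num
      linarith
    · have hq' := (abs_le.1 (happrox q hq.1).1).1
      have := mul_le_mul_of_nonneg_left (hsq q hq.1) hε.le
      linarith [hbdry q hq]
  have hp' := (abs_le.1 (happrox p hp).1).2
  have hη' : ε * (2 + a ^ 2 + b ^ 2) = η := div_mul_cancel₀ η (by positivity)
  have : 0 ≤ ε * p.2 ^ 2 := by positivity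
  linarith

/- For `v < 0` information travels towards smaller `x`, and the first Dirichlet eigenfunction in
`v` decays no faster than exponentially. -/
lemma IsKolmogorovSupersolution.mul_exp_le_of_le_right
    (hh : IsKolmogorovSupersolution D h) (hc : ContinuousOn h D) (hD : IsOpen D)
    (hbox : Icc x₀ x₁ ×ˢ Icc (c - ρ) (c + ρ) ⊆ D)
    (hh₀ : ∀ p ∈ Icc x₀ x₁ ×ˢ Icc (c - ρ) (c + ρ), 0 ≤ h p)
    (hρ : 0 < ρ) (hcρ : c + ρ < 0) (hθ : θ * ρ = Real.pi / 2) (hκ : θ ^ 2 ≤ -(κ * (c + ρ)))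
    (hμ : 0 ≤ μ) (hμh : ∀ v ∈ Icc (c - ρ) (c + ρ), μ ≤ h (x₁, v)) (hx : x ∈ Icc x₀ x₁) :
    μ * Real.exp (κ * (x - x₁)) ≤ h (x, c) := by
  have hθ₀ : 0 < θ := pos_of_mul_pos_left (hθ ▸ by positivity) hρ.le
  have hκ₀ : 0 ≤ κ := by nlinarith
  have hcos : ∀ v ∈ Icc (c - ρ) (c + ρ), 0 ≤ Real.cos (θ * (v - c)) := fun v hv =>
    Real.cos_nonneg_of_mem_Icc ⟨by nlinarith [hv.1], by nlinarith [hv.2]⟩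
  have hcomp := hh.ge_of_ge_on_incomingBoundary hc hD hbox
    (W := fun q => μ * Real.exp (κ * (q.1 - x₁)) * Real.cos (θ * (q.2 - c)))
    (by fun_prop) (fun p hp => ?_) (fun p hp => ?_) (x, c)
    ⟨hx, by linarith, by linarith⟩
  · simpa using hcomp
  · have hexp : HasDerivAt (fun x => μ * Real.exp (κ * (x - x₁)))
        (κ * (μ * Real.exp (κ * (p.1 - x₁)))) p.1 :=
      ((((hasDerivAt_id p.1).sub_const x₁).const_mul κ).exp.const_mul μ).congr_deriv (by simp; ring)
    have hlin (v : ℝ) : HasDerivAt (fun v => θ * (v - c)) θ v := by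
      simpa using ((hasDerivAt_id v).sub_const c).const_mul θ
    refine ⟨_, ?_, .fst_mul_snd hexp (fun v => (hlin v).cos) ((hlin p.2).sin.neg.mul_const θ)⟩
    have hprod : 0 ≤ μ * Real.exp (κ * (p.1 - x₁)) * Real.cos (θ * (p.2 - c)) :=
      mul_nonneg (by positivity) (hcos _ (Ioo_subset_Icc_self hp.2))
    have hrate : κ * p.2 + θ ^ 2 ≤ 0 := by
      linarith [mul_le_mul_of_nonneg_left hp.2.2.le hκ₀]
    linear_combination mul_nonpos_of_nonneg_of_nonpos hprod hrate
  · obtain ⟨hp, hv | hv | ⟨-, hv⟩ | ⟨hx₁, -⟩⟩ := hp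
    · simpa [hv, hθ] using hh₀ p hp
    · simpa [hv, hθ] using hh₀ p hp
    · exact absurd hp.2.2 (hcρ.trans_le hv).not_ge
    · obtain ⟨y, v⟩ := p
      obtain rfl : y = x₁ := hx₁
      simpa using (mul_le_of_le_one_right hμ (Real.cos_le_one _)).trans (hμh v hp.2)

lemma mul_phi0Barrier_le_of_mem_incomingBoundary (hδ : 0 < δ) (hδX : δ ≤ X) (ha : a ≤ 0)
    (hb : 0 < b) (hM : 0 ≤ M) (hκ : 0 ≤ κ)
    (hh₀ : ∀ p ∈ Icc δ X ×ˢ Icc a b, 0 ≤ h p)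
    (hleft : ∀ x ∈ Icc δ X, κ * (phi0 X a + M / 6 * (-a) ^ 3) ≤ h (x, a))
    (hright : ∀ v ∈ Icc a 0, κ * (phi0 X a + M / 6 * (-a) ^ 3) ≤ h (X, v)) {p : P2}
    (hp : p ∈ incomingBoundary δ X a b) : κ * phi0Barrier M b (phi0 δ 0) p ≤ h p := by
  obtain ⟨x, v⟩ := p
  obtain ⟨⟨hx, hv⟩, hside⟩ := hp
  simp only at hx hv hside
  have hx₀ : 0 < x := hδ.trans_le hx.1
  have hφb := phi0_pos hx₀ b
  have hφδ := phi0_pos hδ 0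
  have hφX : phi0 x a ≤ phi0 X a := monotoneOn_phi0 a hx₀ (hδ.trans_le hδX) hx.2
  have hφa := phi0_antitone hx₀ hv.1
  have hcube : M / 6 * max (-v) 0 ^ 3 ≤ M / 6 * (-a) ^ 3 := by
    have : max (-v) 0 ≤ -a := max_le (neg_le_neg hv.1) (neg_nonneg.2 ha)
    gcongr
  have hupper : κ * phi0Barrier M b (phi0 δ 0) (x, v) ≤ κ * (phi0 X a + M / 6 * (-a) ^ 3) :=
    mul_le_mul_of_nonneg_left (by simp only [phi0Barrier]; linarith) hκ
  rcases hside with rfl | rfl | ⟨rfl, hv₀⟩ | ⟨rfl, hv₀⟩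
  · exact hupper.trans (hleft x hx)
  · refine le_trans (mul_nonpos_of_nonneg_of_nonpos hκ ?_) (hh₀ _ ⟨hx, hv⟩)
    simp [phi0Barrier, hb.le, hφδ.le]
  · refine le_trans (mul_nonpos_of_nonneg_of_nonpos hκ ?_) (hh₀ _ ⟨hx, hv⟩)
    have := phi0_antitone hx₀ hv₀
    simp only [phi0Barrier, max_eq_right (neg_nonpos.2 hv₀)]
    linarith
  · exact hupper.trans (hright v ⟨hv.1, hv₀⟩)

/- The barrier on `[δ, X] × [a, b]` is lowered by `φ₀(δ, 0)`, which vanishes as `δ → 0`, to be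
nonpositive on the incoming end `{δ} × [0, b]`. -/
lemma IsKolmogorovSupersolution.mul_phi0_sub_le
    (hh : IsKolmogorovSupersolution D h) (hc : ContinuousOn h D) (hD : IsOpen D)
    (hbox : Ioc 0 X ×ˢ Icc a b ⊆ D) (ha : a ≤ 0) (hb : 0 < b)
    (hφM : ∀ x ∈ Ioc 0 X, phi0XDeriv x b ≤ M) (hκ : 0 ≤ κ)
    (hh₀ : ∀ p ∈ Ioc 0 X ×ˢ Icc a b, 0 ≤ h p)
    (hleft : ∀ x ∈ Ioc 0 X, κ * (phi0 X a + M / 6 * (-a) ^ 3) ≤ h (x, a))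
    (hright : ∀ v ∈ Icc a 0, κ * (phi0 X a + M / 6 * (-a) ^ 3) ≤ h (X, v))
    (hx : x ∈ Ioc 0 X) (hv : v ∈ Icc a b) : κ * (phi0 x v - phi0 x b) ≤ h (x, v) := by
  have hM : 0 ≤ M := (phi0XDeriv_nonneg hx.1 b).trans (hφM x hx)
  have hbarrier : ∀ δ ∈ Ioo 0 x, κ * (phi0 x v - phi0 x b - phi0 δ 0) ≤ h (x, v) := by
    intro δ hδ
    have hIcc : Icc δ X ⊆ Ioc 0 X := fun y hy => ⟨hδ.1.trans_le hy.1, hy.2⟩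
    have hcomp := hh.ge_of_ge_on_incomingBoundary hc hD
      ((prod_mono_left hIcc).trans hbox) (W := fun p => κ * phi0Barrier M b (phi0 δ 0) p)
      (((continuousOn_phi0Barrier M b _).mono
        (prod_mono (fun y hy => (hIcc hy).1) (subset_univ _))).const_smul κ)
      (fun p hp => ?_) (fun p hp => ?_) (x, v) ⟨⟨hδ.2.le, hx.2⟩, hv⟩
    · refine le_trans (mul_le_mul_of_nonneg_left ?_ hκ) hcomp
      have : 0 ≤ M / 6 * max (-v) 0 ^ 3 := by positivity
      simp only [phi0Barrier]
      linarith
    · obtain ⟨L, hL, hpL⟩ := exists_nonpos_hasKolmogorovAt_phi0Barrier (phi0 δ 0)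
        (hIcc hp.1).1 (hφM _ (hIcc hp.1))
      exact ⟨_, mul_nonpos_of_nonneg_of_nonpos hκ hL, hpL.const_mul κ⟩
    · exact mul_phi0Barrier_le_of_mem_incomingBoundary hδ.1 (hδ.2.le.trans hx.2) ha hb hM hκ
        (fun q hq => hh₀ q ⟨hIcc hq.1, hq.2⟩) (fun y hy => hleft y (hIcc hy)) hright hp
  have hlim : Tendsto (fun δ => κ * (phi0 x v - phi0 x b - phi0 δ 0)) (𝓝[>] 0)
      (𝓝 (κ * (phi0 x v - phi0 x b))) := by
    simpa using (tendsto_phi0_zero_right.const_sub (phi0 x v - phi0 x b)).const_mul κ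
  exact le_of_tendsto hlim (mem_of_superset (Ioo_mem_nhdsGT hx.1) hbarrier)

end Comparison

/-! ### The Harnack inequality -/

section Harnack

variable {h : P2 → ℝ} {m x v : ℝ}

lemma isOpen_Hrect (r : ℝ) : IsOpen (Hrect r) := isOpen_Ioo.prod isOpen_Ioo

lemma Ioc_prod_Icc_subset_Hrect {r X a b : ℝ} (hX : X < r ^ 3) (ha : -r < a) (hb : b < r) :
    Ioc 0 X ×ˢ Icc a b ⊆ Hrect r :=
  prod_mono (Ioc_subset_Ioo_right hX) (Icc_subset_Ioo ha hb)

lemma phi0_two_le (hx : x ∈ Ioc 0 1) (hv : v ≤ 1) :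
    phi0 x 2 ≤ Real.exp (-7 / 9) * phi0 x v := by
  have hx₀ : 0 < x := hx.1
  have hexp : ((1 : ℝ) ^ 3 - 2 ^ 3) / (9 * x) ≤ -7 / 9 := by
    rw [div_le_iff₀ (by positivity)]
    linarith [hx.2]
  calc phi0 x 2 ≤ Real.exp ((1 ^ 3 - 2 ^ 3) / (9 * x)) * phi0 x 1 :=
        phi0_le_exp_mul hx₀ zero_le_one one_le_two
    _ ≤ Real.exp (-7 / 9) * phi0 x v := by
        gcongr
        exacts [(phi0_pos hx₀ 1).le, phi0_antitone hx₀ hv]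

lemma IsKolmogorovSupersolution.mul_exp_le_neg_one (hh : IsKolmogorovSupersolution (Hrect 4) h)
    (hc : ContinuousOn h (Hrect 4)) (hh₀ : ∀ p ∈ Hrect 4, 0 ≤ h p) (hm : 0 ≤ m)
    (hmh : ∀ v ∈ Ioc (-2) 0, m ≤ h (2, v)) (hx : x ∈ Ioc 0 2) :
    m * Real.exp (-(4 * Real.pi ^ 2)) ≤ h (x, -1) := by
  have hbox : Icc x 2 ×ˢ Icc (-1 - 1 / 2) (-1 + 1 / 2) ⊆ Hrect 4 :=
    prod_mono (Icc_subset_Ioo hx.1 (by norm_num)) (Icc_subset_Ioo (by norm_num) (by norm_num))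
  have hprop := hh.mul_exp_le_of_le_right hc (isOpen_Hrect 4) hbox (fun p hp => hh₀ p (hbox hp))
    (θ := Real.pi) (κ := 2 * Real.pi ^ 2) (by norm_num) (by norm_num) (by ring) (by linarith) hm
    (fun v hv => hmh v ⟨by linarith [hv.1], by linarith [hv.2]⟩) ⟨le_rfl, hx.2⟩
  refine le_trans (mul_le_mul_of_nonneg_left (Real.exp_le_exp.2 ?_) hm) hprop
  nlinarith [mul_pos hx.1 (sq_pos_of_pos Real.pi_pos)]

lemma exists_mul_phi0_le : ∃ η > 0, ∀ h : P2 → ℝ, IsKolmogorovSupersolution (Hrect 4) h →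
    ContinuousOn h (Hrect 4) → (∀ p ∈ Hrect 4, 0 ≤ h p) → ∀ m ≥ 0,
    (∀ v ∈ Ioc (-2) 0, m * phi0 2 v ≤ h (2, v)) →
    ∀ p ∈ Ioo 0 1 ×ˢ Ioo (-1) 1, η * m * phi0 p.1 p.2 ≤ h p := by
  obtain ⟨M, hφM⟩ := exists_phi0XDeriv_le (v := 2) two_pos 2
  have hφ := phi0_pos (x := 2) two_pos
  have hM : 0 ≤ M := (phi0XDeriv_nonneg two_pos 2).trans (hφM 2 ⟨two_pos, le_rfl⟩)
  set B := phi0 2 (-1) + M / 6 * (- -1) ^ 3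
  have hB : 0 < B := by have := hφ (-1); positivity
  set q := Real.exp (-7 / 9)
  have hq : 0 < 1 - q := sub_pos.2 (Real.exp_lt_one_iff.2 (by norm_num))
  set E := Real.exp (-(4 * Real.pi ^ 2))
  have hE : E ≤ 1 := Real.exp_le_one_iff.2 (neg_nonpos.2 (by positivity))
  refine ⟨phi0 2 0 * E / B * (1 - q), by have := hφ 0; positivity, ?_⟩
  rintro h hh hc hh₀ m hm hmh ⟨x, v⟩ ⟨hx, hv⟩
  have hm₀ : 0 ≤ m * phi0 2 0 := mul_nonneg hm (hφ 0).le
  have hmh₀ : ∀ v ∈ Ioc (-2) 0, m * phi0 2 0 ≤ h (2, v) := fun v hv =>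
    (mul_le_mul_of_nonneg_left (phi0_antitone two_pos hv.2) hm).trans (hmh v hv)
  set κ := m * phi0 2 0 * E / B
  have hκ : 0 ≤ κ := by positivity
  have hκB : κ * B = m * phi0 2 0 * E := div_mul_cancel₀ _ hB.ne'
  have hbox : Ioc 0 2 ×ˢ Icc (-1) 2 ⊆ Hrect 4 :=
    Ioc_prod_Icc_subset_Hrect (by norm_num) (by norm_num) (by norm_num)
  calc phi0 2 0 * E / B * (1 - q) * m * phi0 x v
      = κ * (phi0 x v - q * phi0 x v) := by ring
    _ ≤ κ * (phi0 x v - phi0 x 2) := by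
        gcongr
        exact phi0_two_le (Ioo_subset_Ioc_self hx) hv.2.le
    _ ≤ h (x, v) :=
        hh.mul_phi0_sub_le hc (isOpen_Hrect 4) hbox (by norm_num) two_pos hφM hκ
          (fun p hp => hh₀ p (hbox hp))
          (fun y hy => hκB.trans_le (hh.mul_exp_le_neg_one hc hh₀ hm₀ hmh₀ hy))
          (fun w hw => hκB.trans_le ((mul_le_of_le_one_right hm₀ hE).trans
            (hmh₀ w ⟨by linarith [hw.1], hw.2⟩)))
          ⟨hx.1, hx.2.le.trans one_le_two⟩ ⟨hv.1.le, hv.2.le.trans one_le_two⟩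

end Harnack

theorem statement_9_general :
    ∃ c : ℝ, 1 ≤ c ∧
      ∀ h : P2 → ℝ, IsKolmogorovSupersolution (Hrect 4) h → ContinuousOn h (Hrect 4) →
        (∀ p ∈ Hrect 4, 0 ≤ h p) →
        sInf ((fun p : P2 => h p / phi0 p.1 p.2) '' (Ioo (1:ℝ) 8 ×ˢ Ioo (-2:ℝ) 2))
          ≤ c * sInf ((fun p : P2 => h p / phi0 p.1 p.2) '' (Ioo (0:ℝ) 1 ×ˢ Ioo (-1:ℝ) 1)) := by
  obtain ⟨η, hη, hbound⟩ := exists_mul_phi0_le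
  refine ⟨max 1 η⁻¹, le_max_left _ _, fun h hh hc hh₀ => ?_⟩
  set S := (fun p : P2 => h p / phi0 p.1 p.2) '' (Ioo (1:ℝ) 8 ×ˢ Ioo (-2:ℝ) 2)
  have hS : ∀ y ∈ S, 0 ≤ y := by
    rintro _ ⟨p, ⟨hx, hv⟩, rfl⟩
    have hp : p ∈ Hrect 4 := ⟨⟨by linarith [hx.1], by linarith [hx.2]⟩,
      by linarith [hv.1], by linarith [hv.2]⟩
    exact div_nonneg (hh₀ p hp) (phi0_pos hp.1.1 _).le
  have hm : 0 ≤ sInf S := Real.sInf_nonneg hS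
  have hmh : ∀ v ∈ Ioc (-2) 0, sInf S * phi0 2 v ≤ h (2, v) := fun v hv =>
    (le_div_iff₀ (phi0_pos two_pos v)).1 <| csInf_le ⟨0, hS⟩
      ⟨(2, v), ⟨⟨one_lt_two, by norm_num⟩, hv.1, hv.2.trans_lt two_pos⟩, rfl⟩
  have hinf : η * sInf S ≤
      sInf ((fun p : P2 => h p / phi0 p.1 p.2) '' (Ioo (0:ℝ) 1 ×ˢ Ioo (-1:ℝ) 1)) := by
    refine le_csInf (Nonempty.image _ (by simp [prod_nonempty_iff])) ?_
    rintro _ ⟨p, hp, rfl⟩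
    exact (le_div_iff₀ (phi0_pos hp.1.1 _)).2 (hbound h hh hc hh₀ _ hm hmh p hp)
  calc sInf S = η⁻¹ * (η * sInf S) := (inv_mul_cancel_left₀ hη.ne' _).symm
    _ ≤ max 1 η⁻¹ * (η * sInf S) := by gcongr; exact le_max_right _ _
    _ ≤ _ := by gcongr

theorem statement_9 :
    ∃ c : ℝ, 1 ≤ c ∧
      ∀ h hv : P2 → ℝ, IsWeakSolRect 4 h hv → ContinuousOn h (Hrect 4) →
        (∀ p ∈ Hrect 4, 0 ≤ h p) →
        sInf ((fun p : P2 => h p / phi0 p.1 p.2) ''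
            (Set.Ioo (1:ℝ) 8 ×ˢ Set.Ioo (-2:ℝ) 2))
          ≤ c * sInf ((fun p : P2 => h p / phi0 p.1 p.2) ''
              (Set.Ioo (0:ℝ) 1 ×ˢ Set.Ioo (-1:ℝ) 1)) :=
  let ⟨c, hc, hbound⟩ := statement_9_general
  ⟨c, hc, fun h _ hh => hbound h hh.isKolmogorovSupersolution⟩
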